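/- arXiv:2603.02044 — 3 statements merged into one kernel-verified Lean document; each statement's English description precedes it below -/
import Mathlib

section
/- (Comparison theorem for Rodov splines) Let r and k be integers, f ∈ L^r_{∞,∞}, and let ψ be a spline of one of the following three forms: (i) ψ = α·ψ_r(a,b,0) with α,b > 0, a ≥ 0, r ≥ 3, 0 < k < r−1, and M_0(f) ≤ M_0(ψ), M_{r−1}(f) ≤ M_{r−1}(ψ), M_r(f) ≤ M_r(ψ); (ii) ψ = α·ψ_r(0,b,c) with α,b > 0, c ≥ 0, r ≥ 4, 0 < k < r−2, and M_0(f) ≤ M_0(ψ), M_{r−2}(f) ≤ M_{r−2}(ψ), M_r(f) ≤ M_r(ψ); (iii) ψ = α·ψ_r(a,b,c) with α,b > 0, a,c ≥ 0, r ≥ 4, 0 < k < r−2, and M_0(f) ≤ M_0(ψ), M_{r−2}(f) ≤ M_{r−2}(ψ), M_{r−1}(f) ≤ M_{r−1}(ψ), M_r(f) ≤ M_r(ψ). If ξ, η ∈ ℝ are such that f(ξ) = ψ(η), then |f'(ξ)| ≤ |ψ'(η)|. -/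
open MeasureTheory Filter

noncomputable section

/-- The uniform norm `‖f‖ = sup_{t ∈ ℝ} |f t|` of a function `f : ℝ → ℝ`. -/
def unif (f : ℝ → ℝ) : ℝ := ⨆ t : ℝ, |f t|

/-- `M k f = ‖f⁽ᵏ⁾‖`, the uniform norm of the `k`-th derivative of `f`. -/
def M (k : ℕ) (f : ℝ → ℝ) : ℝ := unif (iteratedDeriv k f)

/-- The class `L^r_{∞,∞}`: bounded functions `f : ℝ → ℝ` having `r-1` (continuous)
derivatives, with `f⁽ʳ⁻¹⁾` locally absolutely continuous and `f⁽ʳ⁾` essentially bounded;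
the last two conditions are equivalent to `f⁽ʳ⁻¹⁾` being Lipschitz. -/
def MemL (r : ℕ) (f : ℝ → ℝ) : Prop :=
  Continuous f ∧ (∃ C : ℝ, ∀ t : ℝ, |f t| ≤ C) ∧ ContDiff ℝ (r - 1 : ℕ) f ∧
    ∃ K : NNReal, LipschitzWith K (iteratedDeriv (r - 1) f)

/-- The Euler perfect spline `φ_r`: the `r`-th `2π`-periodic antiderivative with zero
mean value of `t ↦ sgn (sin t)`. -/
def eulerPhi : ℕ → ℝ → ℝ
  | 0 => fun t => Real.sign (Real.sin t)
  | (s + 1) => fun t =>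
      (∫ x in (0:ℝ)..t, eulerPhi s x) -
        (1 / (2 * Real.pi)) * ∫ x in (0:ℝ)..(2 * Real.pi), ∫ u in (0:ℝ)..x, eulerPhi s u

/-- `φ_{λ,r}(t) = λ^{-r} φ_r (λ t)`. -/
def eulerPhiL (lam : ℝ) (r : ℕ) (t : ℝ) : ℝ := lam ^ (-(r : ℤ)) * eulerPhi r (lam * t)

/-- The basic step function: `0` on `[0,a]`, `1` on `(a, a+b]`, `0` after `a+b`. -/
def psiBase (a b : ℝ) (t : ℝ) : ℝ := if t ≤ a then 0 else if t ≤ a + b then 1 else 0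

/-- `psiBase` continued evenly with respect to the point `a+b+c`. -/
def psiHalf (a b c t : ℝ) : ℝ :=
  if t ≤ a + b + c then psiBase a b t else psiBase a b (2 * (a + b + c) - t)

/-- The Rodov step function `ψ_0(a,b,c)`: equal to `psiBase` on `[0, a+b+c]`, continued
evenly with respect to `a+b+c`, then oddly with respect to `2(a+b+c)`, then
`4(a+b+c)`-periodically. -/
def psiZero (a b c t : ℝ) : ℝ :=
  if (t - 4 * (a + b + c) * ⌊t / (4 * (a + b + c))⌋) ≤ 2 * (a + b + c) then
    psiHalf a b c (t - 4 * (a + b + c) * ⌊t / (4 * (a + b + c))⌋)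
  else
    -psiHalf a b c (4 * (a + b + c) - (t - 4 * (a + b + c) * ⌊t / (4 * (a + b + c))⌋))

/-- `ψ_s(a,b,c)`: the `s`-th periodic antiderivative of `ψ_0(a,b,c)` with zero mean
value over the period `[0, 4(a+b+c)]`. -/
def psi : ℕ → ℝ → ℝ → ℝ → ℝ → ℝ
  | 0 => psiZero
  | (s + 1) => fun a b c t =>
      (∫ x in (0:ℝ)..t, psi s a b c x) -
        (1 / (4 * (a + b + c))) *
          ∫ x in (0:ℝ)..(4 * (a + b + c)), ∫ u in (0:ℝ)..x, psi s a b c u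

/-- The modulus of continuity `ω(D^k, X; δ) = sup {‖f⁽ᵏ⁾‖ : f ∈ X, ‖f‖ ≤ δ}` of the
differentiation operator `D^k` on a class `X`. -/
def omegaMod (k : ℕ) (X : Set (ℝ → ℝ)) (δ : ℝ) : ℝ :=
  sSup {y : ℝ | ∃ f ∈ X, M 0 f ≤ δ ∧ M k f = y}

end


namespace Rodov

open Set Topology

structure Prof (φ : ℝ → ℝ) (L σ ρ : ℝ) : Prop where
  hσ : 0 ≤ σ
  hσρ : σ < ρ
  hρ : ρ ≤ L
  odd : ∀ x, φ (-x) = -φ x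
  even : ∀ x, φ (2 * L - x) = φ x
  zero : ∀ x, 0 ≤ x → x ≤ σ → φ x = 0
  top : ∀ x, ρ ≤ x → x ≤ L → φ x = φ L
  smono : StrictMonoOn φ (Icc σ ρ)
  cont : Continuous φ

lemma Prof.pos {φ : ℝ → ℝ} {L σ ρ : ℝ} (h : Prof φ L σ ρ) {x : ℝ} (h1 : σ < x) (h2 : x ≤ L) :
    0 < φ x := by
  have h0 : φ σ = 0 := h.zero σ h.hσ le_rfl
  have key : ∀ y, σ < y → y ≤ ρ → 0 < φ y := by
    intro y hy1 hy2
    have := h.smono ⟨le_rfl, h.hσρ.le⟩ ⟨hy1.le, hy2⟩ hy1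
    linarith
  rcases le_total x ρ with hx | hx
  · exact key x h1 hx
  · rw [h.top x hx h2, ← h.top ρ le_rfl h.hρ]
    exact key ρ h.hσρ le_rfl

lemma Prof.zero' {φ : ℝ → ℝ} {L σ ρ : ℝ} (h : Prof φ L σ ρ) : φ 0 = 0 := h.zero 0 le_rfl h.hσ

lemma Prof.le_top {φ : ℝ → ℝ} {L σ ρ : ℝ} (h : Prof φ L σ ρ) {x : ℝ} (h1 : 0 ≤ x) (h2 : x ≤ L) :
    0 ≤ φ x ∧ φ x ≤ φ L := by
  have hL := h.hσρ.trans_le h.hρ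
  rcases le_or_gt x σ with hx | hx
  · rw [h.zero x h1 hx]; exact ⟨le_rfl, (h.pos hL le_rfl).le⟩
  refine ⟨(h.pos hx h2).le, ?_⟩
  rcases le_total x ρ with hx' | hx'
  · rw [← h.top ρ le_rfl h.hρ]
    exact h.smono.monotoneOn ⟨hx.le, hx'⟩ ⟨h.hσρ.le, le_rfl⟩ hx'
  · rw [h.top x hx' h2]

lemma Prof.anti {φ : ℝ → ℝ} {L σ ρ : ℝ} (h : Prof φ L σ ρ) (x : ℝ) : φ (x + 2 * L) = - φ x := by
  rw [← h.odd, ← h.even (-x)]; congr 1; ring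

lemma Prof.per {φ : ℝ → ℝ} {L σ ρ : ℝ} (h : Prof φ L σ ρ) : Function.Periodic φ (4 * L) := by
  intro x
  have : x + 4 * L = (x + 2 * L) + 2 * L := by ring
  rw [this, h.anti, h.anti, neg_neg]

/-- reduction of the argument -/
lemma Prof.reduce {φ Φ : ℝ → ℝ} {L σ ρ σ' ρ' : ℝ} (h : Prof φ L σ ρ) (H : Prof Φ L σ' ρ') (x : ℝ) :
    ∃ y, -L ≤ y ∧ y ≤ L ∧ Φ x = Φ y ∧ |φ (x + L)| = |φ (y + L)| := by
  have hL : 0 < L := (h.hσ.trans_lt h.hσρ).trans_le h.hρ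
  obtain ⟨n, hn⟩ : ∃ n : ℤ, -L ≤ x - n * (4 * L) ∧ x - n * (4 * L) < 3 * L := by
    refine ⟨⌊(x + L) / (4 * L)⌋, ?_, ?_⟩
    · have := Int.floor_le ((x + L) / (4 * L))
      rw [le_div_iff₀ (by positivity)] at this
      linarith
    · have := Int.lt_floor_add_one ((x + L) / (4 * L))
      rw [div_lt_iff₀ (by positivity)] at this
      linarith
  have e1 : Φ (x - n * (4 * L)) = Φ x := H.per.sub_int_mul_eq n
  have e2 : φ (x - n * (4 * L) + L) = φ (x + L) := by
    have := h.per.sub_int_mul_eq (x := x + L) n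
    rw [← this]; congr 1; ring
  set z := x - n * (4 * L)
  rcases le_total z L with hz | hz
  · exact ⟨z, hn.1, hz, e1.symm, by rw [e2]⟩
  · refine ⟨2 * L - z, by linarith [hn.2], by linarith, by rw [H.even, e1], ?_⟩
    have e3 : φ (2 * L - z + L) = - φ (z + L) := by
      have e4 : 2 * L - z + L = (L - z) + 2 * L := by ring
      rw [e4, h.anti, ← h.even]
      congr 2; ring
    rw [e3, abs_neg, e2]

lemma Prof.abs_le {φ : ℝ → ℝ} {L σ ρ : ℝ} (h : Prof φ L σ ρ) (x : ℝ) : |φ x| ≤ φ L := by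
  obtain ⟨y, h1, h2, h3, -⟩ := h.reduce h x
  rw [h3]
  rcases le_total 0 y with hy | hy
  · have := h.le_top hy h2
    rw [abs_of_nonneg this.1]; exact this.2
  · have := h.le_top (x := -y) (by linarith) (by linarith)
    rw [← abs_neg, ← h.odd, abs_of_nonneg this.1]; exact this.2

lemma Prof.shift_pos {φ : ℝ → ℝ} {L σ ρ : ℝ} (h : Prof φ L σ ρ) {x : ℝ} (h1 : -(L - σ) < x)
    (h2 : x < L - σ) : 0 < φ (x + L) := by
  rcases le_total x 0 with hx | hx
  · exact h.pos (by linarith) (by linarith)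
  · rw [← h.even]; exact h.pos (by linarith) (by linarith)

lemma Prof.step_smono {φ Φ : ℝ → ℝ} {L σ ρ : ℝ} (h : Prof φ L σ ρ)
    (hd : ∀ x, HasDerivAt Φ (φ (x + L)) x) : StrictMonoOn Φ (Icc (-(L - σ)) (L - σ)) := by
  apply strictMonoOn_of_deriv_pos (convex_Icc _ _)
  · exact fun x _ => (hd x).continuousAt.continuousWithinAt
  · intro x hx
    rw [interior_Icc] at hx
    rw [(hd x).deriv]
    exact h.shift_pos hx.1 hx.2

lemma Prof.step {φ Φ : ℝ → ℝ} {L σ ρ : ℝ} (h : Prof φ L σ ρ)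
    (hd : ∀ x, HasDerivAt Φ (φ (x + L)) x) (hodd : ∀ x, Φ (-x) = - Φ x)
    (heven : ∀ x, Φ (2 * L - x) = Φ x) : Prof Φ L 0 (L - σ) where
  hσ := le_rfl
  hσρ := by linarith [h.hσρ, h.hρ]
  hρ := by linarith [h.hσ]
  odd := hodd
  even := heven
  zero := by
    intro x h1 h2
    have : x = 0 := le_antisymm h2 h1
    subst this
    have := hodd 0
    simp at this; linarith
  top := by
    intro x h1 h2
    rcases h2.eq_or_lt with rfl | h2
    · rfl
    obtain ⟨y, hy, hy'⟩ := exists_hasDerivAt_eq_slope Φ (fun x => φ (x + L)) h2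
      (fun x _ => (hd x).continuousAt.continuousWithinAt) (fun x _ => hd x)
    have : φ (y + L) = 0 := by
      rw [← h.even]
      exact h.zero _ (by linarith [hy.2]) (by linarith [hy.1])
    simp only [this] at hy'
    have h3 : L - x ≠ 0 := by linarith
    field_simp at hy'
    linarith
  smono := (h.step_smono hd).mono (Icc_subset_Icc (by linarith [h.hσρ, h.hρ]) le_rfl)
  cont := continuous_iff_continuousAt.2 fun x => (hd x).continuousAt

def Cmp (h φ : ℝ → ℝ) (σ ρ : ℝ) : Prop :=
  ∀ ξ η s, 0 ≤ s → σ ≤ η - s → η ≤ ρ → φ η ≤ h ξ → φ (η - s) ≤ h (ξ - s)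

lemma refl_deriv {g g' : ℝ → ℝ} (hg : ∀ x, HasDerivAt g (g' x) x) (x : ℝ) :
    HasDerivAt (fun x => - g (-x)) (g' (-x)) x := by
  have h1 : HasDerivAt (fun x => g (-x)) (g' (-x) * -1) x := (hg (-x)).comp x (hasDerivAt_neg x)
  exact h1.neg.congr_deriv (by ring)

/-- integrated comparison -/
lemma integ {φ Φ f f' : ℝ → ℝ} {L σ ρ : ℝ} (hd : ∀ x, HasDerivAt Φ (φ (x + L)) x)
    (hf : ∀ x, HasDerivAt f (f' x) x) (hc : Cmp f' φ σ ρ) {ξ e : ℝ} (h1 : σ ≤ e) (h2 : e ≤ ρ)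
    (h3 : φ e ≤ f' ξ) : Φ (e - L) - Φ (σ - L) ≤ f ξ - f (ξ - (e - σ)) := by
  have hD : ∀ s, HasDerivAt (fun s => Φ (e - L - s) - f (ξ - s)) (-φ (e - s) + f' (ξ - s)) s := by
    intro s
    have a1 := (hd (e - L - s)).comp_const_sub (e - L) s
    have a2 := (hf (ξ - s)).comp_const_sub ξ s
    refine (a1.sub a2).congr_deriv ?_
    rw [show e - L - s + L = e - s by ring]; ring
  have hm : MonotoneOn (fun s => Φ (e - L - s) - f (ξ - s)) (Icc 0 (e - σ)) := by
    apply monotoneOn_of_deriv_nonneg (convex_Icc _ _)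
    · exact fun s _ => (hD s).continuousAt.continuousWithinAt
    · exact fun s _ => (hD s).differentiableAt.differentiableWithinAt
    · intro s hs
      rw [interior_Icc] at hs
      rw [(hD s).deriv]
      have := hc ξ e s hs.1.le (by linarith [hs.2]) h2 h3
      linarith
  have := hm ⟨le_rfl, by linarith⟩ ⟨by linarith, le_rfl⟩ (show (0:ℝ) ≤ e - σ by linarith)
  simp only [sub_zero] at this
  rw [show e - L - (e - σ) = σ - L by ring] at this
  linarith

/-- strict derivative comparison, left half -/
lemma strict_left {φ Φ F F' : ℝ → ℝ} {L σ ρ : ℝ} (h : Prof φ L σ ρ) (H : Prof Φ L 0 (L - σ))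
    (hd : ∀ x, HasDerivAt Φ (φ (x + L)) x) (hF : ∀ x, HasDerivAt F (F' x) x)
    (hc : Cmp F' φ σ ρ) (hb : ∀ x, |F x| < Φ L)
    (hb' : ρ = L ∨ ∀ x, F' x < φ L) {ξ η : ℝ} (h1 : -(L - σ) ≤ η) (h2 : η ≤ 0)
    (heq : F ξ = Φ η) : F' ξ < φ (η + L) := by
  by_contra! hcon
  have htop : Φ (L - σ) = Φ L := H.top _ le_rfl (by linarith [h.hσ])
  have h1' : -(L - σ) < η := by
    rcases h1.eq_or_lt with h1 | h1
    · have := hb ξ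
      rw [heq, ← h1, H.odd, htop, abs_neg] at this
      exact absurd (le_abs_self _) (not_le.2 this)
    · exact h1
  rcases le_or_gt (η + L) ρ with he | he
  · have := integ hd hF hc (ξ := ξ) (e := η + L) (by linarith) he hcon
    rw [show η + L - L = η by ring, show σ - L = -(L - σ) by ring, H.odd, htop, heq] at this
    have h4 := hb (ξ - (η + L - σ))
    rw [abs_lt] at h4
    linarith [h4.1]
  · rcases hb' with hb' | hb'
    · linarith
    · have := h.top (η + L) he.le (by linarith)
      linarith [hb' ξ]

lemma strict_cmp {φ Φ F F' : ℝ → ℝ} {L σ ρ : ℝ} (h : Prof φ L σ ρ) (H : Prof Φ L 0 (L - σ))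
    (hd : ∀ x, HasDerivAt Φ (φ (x + L)) x) (hF : ∀ x, HasDerivAt F (F' x) x)
    (hc : Cmp F' φ σ ρ) (hc' : Cmp (fun x => F' (-x)) φ σ ρ) (hb : ∀ x, |F x| < Φ L)
    (hb' : ρ = L ∨ ∀ x, F' x < φ L) : Cmp F Φ (-(L - σ)) (L - σ) := by
  have key : ∀ ξ η, -(L - σ) ≤ η → η ≤ L - σ → F ξ = Φ η → F' ξ < φ (η + L) := by
    intro ξ η h1 h2 heq
    rcases le_total η 0 with hη | hη
    · exact strict_left h H hd hF hc hb hb' h1 hη heq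
    · have hG : ∀ x, HasDerivAt (fun x => - F (-x)) (F' (-x)) x := by
        exact fun x => refl_deriv hF x
      have := strict_left (F := fun x => - F (-x)) (F' := fun x => F' (-x)) h H hd hG hc'
        (by intro x; rw [abs_neg]; exact hb _)
        (by rcases hb' with hb' | hb'
            · exact Or.inl hb'
            · exact Or.inr fun x => hb' _) (ξ := -ξ) (η := -η) (by linarith) (by linarith)
        (by simp [H.odd, heq])
      simp only [neg_neg] at this
      rw [← h.even (η + L)]
      convert this using 2; ring
  intro ξ η s hs h1 h2 h3
  have hA : ∀ t, HasDerivAt (fun t => Φ (η - t)) (-φ (η - t + L)) t := fun t =>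
    (hd (η - t)).comp_const_sub η t
  have hB : ∀ t, HasDerivAt (fun t => F (ξ - t)) (-F' (ξ - t)) t := fun t =>
    (hF (ξ - t)).comp_const_sub ξ t
  refine image_le_of_deriv_right_lt_deriv_boundary (f := fun t => Φ (η - t))
    (f' := fun t => -φ (η - t + L)) (a := 0) (b := s) (B := fun t => F (ξ - t))
    (B' := fun t => -F' (ξ - t)) (fun t _ => (hA t).continuousAt.continuousWithinAt)
    (fun t _ => (hA t).hasDerivWithinAt) (by simpa using h3) hB ?_ ⟨hs, le_rfl⟩
  intro t ht hE
  have := key (ξ - t) (η - t) (by linarith [ht.2]) (by linarith [ht.1]) hE.symm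
  linarith

lemma stepB {φ Φ f f' : ℝ → ℝ} {L σ ρ : ℝ} (h : Prof φ L σ ρ) (H : Prof Φ L 0 (L - σ))
    (hd : ∀ x, HasDerivAt Φ (φ (x + L)) x) (hf : ∀ x, HasDerivAt f (f' x) x)
    (hc : ∀ κ, 0 < κ → κ < 1 → Cmp (fun x => κ * f' x) φ σ ρ)
    (hc' : ∀ κ, 0 < κ → κ < 1 → Cmp (fun x => κ * f' (-x)) φ σ ρ) (hb : ∀ x, |f x| ≤ Φ L)
    (hb' : ρ = L ∨ ∀ x, |f' x| ≤ φ L) : Cmp f Φ (-(L - σ)) (L - σ) := by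
  have hσL : σ < L := h.hσρ.trans_le h.hρ
  have hL : 0 < L := h.hσ.trans_lt hσL
  have hpΦ : 0 < Φ L := H.pos hL le_rfl
  have hpφ : 0 < φ L := h.pos hσL le_rfl
  have hk : ∀ κ, 0 < κ → κ < 1 → Cmp (fun x => κ * f x) Φ (-(L - σ)) (L - σ) := by
    intro κ h0 h1
    refine strict_cmp h H hd (fun x => (hf x).const_mul κ) (hc κ h0 h1) (hc' κ h0 h1) ?_ ?_
    · intro x
      rw [abs_mul, abs_of_pos h0]
      nlinarith [hb x, abs_nonneg (f x)]
    · rcases hb' with hb' | hb'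
      · exact Or.inl hb'
      · right
        intro x
        nlinarith [hb' x, le_abs_self (f' x), abs_nonneg (f' x)]
  intro ξ η s hs h1 h2 h3
  have htop : Φ (L - σ) = Φ L := H.top _ le_rfl (by linarith [h.hσ])
  rcases h1.eq_or_lt with h1 | h1
  · rw [← h1, H.odd, htop]
    exact (abs_le.1 (hb _)).1
  have hη : ∀ η', η' < η → -(L - σ) < η' - s → Φ (η' - s) ≤ f (ξ - s) := by
    intro η' ha hb
    have hlt : Φ η' < f ξ := lt_of_lt_of_le
      (h.step_smono hd ⟨by linarith, by linarith⟩ ⟨by linarith, h2⟩ ha) h3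
    have t1 : Tendsto (fun κ : ℝ => κ * f ξ) (𝓝[<] 1) (𝓝 (1 * f ξ)) :=
      ((continuous_id.mul continuous_const).tendsto 1).mono_left nhdsWithin_le_nhds
    have t2 : Tendsto (fun κ : ℝ => κ * f (ξ - s)) (𝓝[<] 1) (𝓝 (1 * f (ξ - s))) :=
      ((continuous_id.mul continuous_const).tendsto 1).mono_left nhdsWithin_le_nhds
    rw [one_mul] at t1 t2
    refine ge_of_tendsto t2 ?_
    filter_upwards [t1.eventually (lt_mem_nhds hlt), self_mem_nhdsWithin,
      nhdsWithin_le_nhds (lt_mem_nhds (show (0:ℝ) < 1 by norm_num))] with κ k1 k2 k3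
    exact hk κ k3 k2 ξ η' s hs hb.le (by linarith) k1.le
  have t3 : Tendsto (fun η' : ℝ => Φ (η' - s)) (𝓝[<] η) (𝓝 (Φ (η - s))) :=
    ((H.cont.comp (continuous_id.sub continuous_const)).tendsto η).mono_left nhdsWithin_le_nhds
  refine le_of_tendsto t3 ?_
  filter_upwards [self_mem_nhdsWithin,
      nhdsWithin_le_nhds (lt_mem_nhds (show s - (L - σ) < η by linarith))] with η' k1 k2
  exact hη η' k1 (by linarith)

lemma Cmp.mono {h φ : ℝ → ℝ} {σ ρ σ' ρ' : ℝ} (hc : Cmp h φ σ ρ) (h1 : σ ≤ σ') (h2 : ρ' ≤ ρ) :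
    Cmp h φ σ' ρ' := fun ξ η s a b c d => hc ξ η s a (h1.trans b) (c.trans h2) d

/-- the norm of the derivative -/
lemma stepA {φ Φ f f' : ℝ → ℝ} {L : ℝ} (h : Prof φ L 0 L) (H : Prof Φ L 0 L)
    (hd : ∀ x, HasDerivAt Φ (φ (x + L)) x) (hf : ∀ x, HasDerivAt f (f' x) x)
    (hbd : ∃ C, ∀ x, |f' x| ≤ C)
    (hc : ∀ κ, 0 < κ → κ ≤ 1 → (∀ x, |κ * f' x| ≤ φ L) → Cmp (fun x => κ * f' x) φ 0 L ∧
      Cmp (fun x => κ * f' (-x)) φ 0 L ∧ Cmp (fun x => κ * -f' x) φ 0 L ∧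
      Cmp (fun x => κ * -f' (-x)) φ 0 L)
    (hb : ∀ x, |f x| ≤ Φ L) : ∀ x, |f' x| ≤ φ L := by
  have hL : 0 < L := h.hσρ
  have hpΦ : 0 < Φ L := H.pos hL le_rfl
  have hpφ : 0 < φ L := h.pos hL le_rfl
  by_contra! hcon
  obtain ⟨x0, hx0⟩ := hcon
  obtain ⟨C, hC⟩ := hbd
  have hbdd : BddAbove (range fun x => |f' x|) := ⟨C, by rintro _ ⟨x, rfl⟩; exact hC x⟩
  set m := ⨆ x, |f' x| with hm
  have hle : ∀ x, |f' x| ≤ m := fun x => le_ciSup hbdd x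
  have hpm : φ L < m := hx0.trans_le (hle x0)
  have hm0 : 0 < m := hpφ.trans hpm
  set κ := φ L / m with hκ
  have hκ0 : 0 < κ := by positivity
  have hκ1 : κ < 1 := by rw [hκ, div_lt_one hm0]; exact hpm
  have hκm : κ * m = φ L := by rw [hκ]; field_simp
  obtain ⟨c1, c2, c3, c4⟩ := hc κ hκ0 hκ1.le (by
    intro x
    rw [abs_mul, abs_of_pos hκ0, ← hκm]
    exact mul_le_mul_of_nonneg_left (hle x) hκ0.le)
  -- generic oscillation estimate
  have osc : ∀ g g' : ℝ → ℝ, (∀ x, HasDerivAt g (g' x) x) → Cmp g' φ 0 L →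
      Cmp (fun x => g' (-x)) φ 0 L → (∀ x, |g x| ≤ κ * Φ L) → ∀ ξ η, 0 ≤ η → η ≤ L →
      φ η ≤ g' ξ → Φ (η - L) + Φ L ≤ κ * Φ L := by
    intro g g' hg k1 k2 k3 ξ η h1 h2 h3
    have e1 := integ hd hg k1 h1 h2 h3
    have hG : ∀ x, HasDerivAt (fun x => - g (-x)) (g' (-x)) x := by
      exact fun x => refl_deriv hg x
    have e2 := integ (ξ := -ξ) hd hG k2 h1 h2 (by simpa using h3)
    simp only [zero_sub, H.odd, sub_zero, neg_neg] at e1 e2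
    have e3 := abs_le.1 (k3 (ξ - η))
    have e4 := abs_le.1 (k3 (-(-ξ - η)))
    linarith
  have hall : ∀ η, 0 ≤ η → η < L → Φ (η - L) + Φ L ≤ κ * Φ L := by
    intro η h1 h2
    have hlt : φ η < φ L := h.smono ⟨h1, h2.le⟩ ⟨hL.le, le_rfl⟩ h2
    have h3 : φ η / κ < m := by rw [div_lt_iff₀ hκ0]; linarith
    obtain ⟨ξ, hξ⟩ := exists_lt_of_lt_ciSup h3
    rw [div_lt_iff₀ hκ0] at hξ
    have hbk : ∀ x, |κ * f x| ≤ κ * Φ L := by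
      intro x
      rw [abs_mul, abs_of_pos hκ0]
      exact mul_le_mul_of_nonneg_left (hb x) hκ0.le
    rcases abs_cases (f' ξ) with ⟨e, -⟩ | ⟨e, -⟩
    · rw [e] at hξ
      exact osc (fun x => κ * f x) _ (fun x => (hf x).const_mul κ) c1 c2 hbk ξ η h1 h2.le
        (by linarith)
    · rw [e] at hξ
      refine osc (fun x => κ * -f x) (fun x => κ * -f' x) (fun x => ((hf x).neg).const_mul κ) c3 c4
        ?_ ξ η h1 h2.le (by linarith)
      intro x
      rw [mul_neg, abs_neg]; exact hbk x
  have t3 : Tendsto (fun η : ℝ => Φ (η - L) + Φ L) (𝓝[<] L) (𝓝 (Φ (L - L) + Φ L)) :=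
    (((H.cont.comp (continuous_id.sub continuous_const)).add continuous_const).tendsto
      L).mono_left nhdsWithin_le_nhds
  have : Φ (L - L) + Φ L ≤ κ * Φ L := by
    refine le_of_tendsto t3 ?_
    filter_upwards [self_mem_nhdsWithin, nhdsWithin_le_nhds (lt_mem_nhds hL)] with η k1 k2
    exact hall η k2.le k1
  rw [sub_self, H.zero'] at this
  nlinarith

/-- derivative inequality from comparison -/
lemma deriv_of_cmp {Φ f : ℝ → ℝ} {L ξ η d D : ℝ} (hL : 0 < L) (hodd : ∀ x, Φ (-x) = - Φ x)
    (hd : HasDerivAt Φ D η) (hf : HasDerivAt f d ξ) (hc : Cmp f Φ (-L) L)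
    (hc' : Cmp (fun x => - f (-x)) Φ (-L) L) (h1 : -L ≤ η) (h2 : η ≤ L) (heq : f ξ = Φ η) :
    d ≤ D := by
  have gen : ∀ (G : ℝ → ℝ) (g δ : ℝ), 0 < δ → HasDerivAt G g 0 → G 0 = 0 →
      (∀ s, 0 < s → s < δ → 0 ≤ G s) → 0 ≤ g := by
    intro G g δ hδ hG h0 hpos
    have := (hasDerivAt_iff_tendsto_slope.1 hG).mono_left
      (nhdsWithin_mono 0 (show Ioi (0:ℝ) ⊆ {0}ᶜ by intro x hx; simpa using (ne_of_gt hx)))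
    refine ge_of_tendsto this ?_
    filter_upwards [self_mem_nhdsWithin, nhdsWithin_le_nhds (gt_mem_nhds hδ)] with s k1 k2
    rw [slope_def_field, h0]
    have := hpos s k1 k2
    have k1' : 0 < s := k1
    apply div_nonneg <;> linarith
  rcases lt_or_ge (-L) η with h | h
  · have := gen (fun s => f (ξ - s) - Φ (η - s)) (-d - -D) (η + L) (by linarith)
      (HasDerivAt.sub (HasDerivAt.comp_const_sub ξ 0 (by simpa using hf))
        (HasDerivAt.comp_const_sub η 0 (by simpa using hd))) (by simp [heq])
      (by intro s s1 s2
          have := hc ξ η s s1.le (by linarith) h2 heq.ge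
          linarith)
    linarith
  · have := gen (fun s => Φ (η + s) - f (ξ + s)) (D - d) (L - η) (by linarith)
      (HasDerivAt.sub (HasDerivAt.comp_const_add η 0 (by simpa using hd))
        (HasDerivAt.comp_const_add ξ 0 (by simpa using hf))) (by simp [heq])
      (by intro s s1 s2
          have := hc' (-ξ) (-η) s s1.le (by linarith) (by linarith) (by simp [hodd, heq])
          rw [show -η - s = -(η + s) by ring, hodd] at this
          beta_reduce at this
          rw [show -(-ξ - s) = ξ + s by ring] at this
          linarith)
    linarith

section Psi

variable {a b c : ℝ}

lemma psiHalf_even (t : ℝ) : psiHalf a b c (2 * (a + b + c) - t) = psiHalf a b c t := by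
  unfold psiHalf
  split_ifs with h1 h2 h2
  · have : t = a + b + c := by linarith
    rw [this]; congr 1; ring
  · rfl
  · congr 1; ring
  · linarith

lemma psiZero_lo {t : ℝ} (hL : 0 < a + b + c) (h1 : 0 ≤ t) (h2 : t ≤ 2 * (a + b + c)) :
    psiZero a b c t = psiHalf a b c t := by
  have : ⌊t / (4 * (a + b + c))⌋ = 0 := by
    rw [Int.floor_eq_zero_iff]
    exact ⟨by positivity, by rw [div_lt_one (by positivity)]; linarith⟩
  simp [psiZero, this, h2]

lemma psiZero_hi {t : ℝ} (hL : 0 < a + b + c) (h1 : 2 * (a + b + c) < t)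
    (h2 : t < 4 * (a + b + c)) :
    psiZero a b c t = - psiHalf a b c (4 * (a + b + c) - t) := by
  have : ⌊t / (4 * (a + b + c))⌋ = 0 := by
    rw [Int.floor_eq_zero_iff]
    exact ⟨by apply div_nonneg <;> linarith, by rw [div_lt_one (by positivity)]; linarith⟩
  simp [psiZero, this, not_le.2 h1]

lemma psiZero_per (hL : 0 < a + b + c) : Function.Periodic (psiZero a b c) (4 * (a + b + c)) := by
  intro t
  have : ⌊(t + 4 * (a + b + c)) / (4 * (a + b + c))⌋ = ⌊t / (4 * (a + b + c))⌋ + 1 := by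
    rw [add_div, div_self (by positivity), Int.floor_add_one]
  unfold psiZero
  rw [this]
  push_cast
  rw [show t + 4 * (a + b + c) - 4 * (a + b + c) * ((⌊t / (4 * (a + b + c))⌋ : ℝ) + 1) =
    t - 4 * (a + b + c) * (⌊t / (4 * (a + b + c))⌋ : ℝ) by ring]

lemma psiHalf_zero (ha : 0 ≤ a) (hL : 0 < a + b + c) : psiHalf a b c 0 = 0 := by
  simp [psiHalf, psiBase, ha, hL.le]

lemma red4 (hL : 0 < a + b + c) (t : ℝ) : ∃ n : ℤ, 0 ≤ t - n * (4 * (a + b + c)) ∧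
    t - n * (4 * (a + b + c)) < 4 * (a + b + c) := by
  refine ⟨⌊t / (4 * (a + b + c))⌋, ?_, ?_⟩
  · have := Int.floor_le (t / (4 * (a + b + c)))
    rw [le_div_iff₀ (by positivity)] at this
    linarith
  · have := Int.lt_floor_add_one (t / (4 * (a + b + c)))
    rw [div_lt_iff₀ (by positivity)] at this
    linarith

lemma psiZero_anti (ha : 0 ≤ a) (hL : 0 < a + b + c) (t : ℝ) :
    psiZero a b c (t + 2 * (a + b + c)) = - psiZero a b c t := by
  obtain ⟨n, h1, h2⟩ := red4 hL t
  have e1 := (psiZero_per hL).sub_int_mul_eq (x := t) n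
  have e2 := (psiZero_per hL).sub_int_mul_eq (x := t + 2 * (a + b + c)) n
  rw [← e1, ← e2, show t + 2 * (a + b + c) - n * (4 * (a + b + c)) =
    (t - n * (4 * (a + b + c))) + 2 * (a + b + c) by ring]
  generalize t - n * (4 * (a + b + c)) = u at *
  have hz := psiHalf_zero (b := b) (c := c) ha hL
  have hz2 : psiHalf a b c (2 * (a + b + c)) = 0 := by
    have := psiHalf_even (a := a) (b := b) (c := c) 0
    rw [sub_zero] at this; rw [this, hz]
  rcases h1.eq_or_lt with h1 | h1
  · rw [← h1, zero_add, psiZero_lo hL (by linarith) le_rfl, psiZero_lo hL le_rfl (by linarith),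
      hz, hz2]; simp
  rcases lt_trichotomy u (2 * (a + b + c)) with h3 | h3 | h3
  · rw [psiZero_hi hL (by linarith) (by linarith), psiZero_lo hL h1.le h3.le, ← psiHalf_even u]
    congr 2; ring
  · rw [h3, show 2 * (a + b + c) + 2 * (a + b + c) = 0 + 4 * (a + b + c) by ring,
      psiZero_per hL, psiZero_lo hL (by linarith) le_rfl, psiZero_lo hL le_rfl (by linarith),
      hz, hz2]; simp
  · rw [psiZero_hi hL h3 h2, show u + 2 * (a + b + c) = (u - 2 * (a + b + c)) + 4 * (a + b + c)
      by ring, psiZero_per hL, psiZero_lo hL (by linarith) (by linarith),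
      ← psiHalf_even (u - 2 * (a + b + c)), neg_neg]
    congr 1; ring

lemma psiZero_odd (ha : 0 ≤ a) (hL : 0 < a + b + c) (t : ℝ) :
    psiZero a b c (-t) = - psiZero a b c t := by
  obtain ⟨n, h1, h2⟩ := red4 hL t
  have e1 := (psiZero_per hL).sub_int_mul_eq (x := t) n
  have e2 := (psiZero_per hL).int_mul n (-t)
  rw [← e1, ← e2, show -t + n * (4 * (a + b + c)) = -(t - n * (4 * (a + b + c))) by ring]
  generalize t - n * (4 * (a + b + c)) = u at *
  have hz := psiHalf_zero (b := b) (c := c) ha hL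
  rcases h1.eq_or_lt with h1 | h1
  · rw [← h1, neg_zero, psiZero_lo hL le_rfl (by linarith), hz]; simp
  rcases le_or_gt u (2 * (a + b + c)) with h3 | h3
  · have := psiZero_anti ha hL (-u)
    rw [psiZero_lo hL (by linarith) (by linarith), show -u + 2 * (a + b + c) =
      2 * (a + b + c) - u by ring, psiHalf_even] at this
    rw [psiZero_lo hL h1.le h3]; linarith
  · rw [psiZero_hi hL h3 h2, neg_neg, ← psiZero_per hL, psiZero_lo hL (by linarith) (by linarith)]
    congr 1; ring

lemma psiZero_abs (t : ℝ) : |psiZero a b c t| ≤ 1 := by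
  unfold psiZero psiHalf psiBase
  split_ifs <;> simp

lemma psiZero_meas : Measurable (psiZero a b c) := by
  have h1 : Measurable (psiBase a b) := by
    unfold psiBase
    exact Measurable.ite measurableSet_Iic measurable_const
      (Measurable.ite measurableSet_Iic measurable_const measurable_const)
  have h2 : Measurable (psiHalf a b c) := by
    unfold psiHalf
    exact Measurable.ite measurableSet_Iic h1 (h1.comp (by fun_prop))
  have h3 : Measurable (fun t : ℝ => t - 4 * (a + b + c) * (⌊t / (4 * (a + b + c))⌋ : ℝ)) := by
    have : Measurable (fun t : ℝ => (⌊t / (4 * (a + b + c))⌋ : ℝ)) :=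
      measurable_from_top.comp ((measurable_id.div_const _).floor)
    fun_prop
  unfold psiZero
  exact Measurable.ite (measurableSet_le h3 measurable_const) (h2.comp h3)
    (h2.comp (measurable_const.sub h3)).neg

lemma psiZero_int (x y : ℝ) : IntervalIntegrable (psiZero a b c) volume x y := by
  rw [intervalIntegrable_iff]
  refine Measure.integrableOn_of_bounded (M := 1) (by simp) psiZero_meas.aestronglyMeasurable ?_
  exact Filter.Eventually.of_forall fun t => psiZero_abs t

lemma psi_reg (s : ℕ) : (∀ x y, IntervalIntegrable (psi s a b c) volume x y) ∧
    Continuous (psi (s + 1) a b c) := by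
  induction s with
  | zero =>
    refine ⟨psiZero_int, ?_⟩
    exact (intervalIntegral.continuous_primitive psiZero_int 0).sub continuous_const
  | succ s ih =>
    have h1 : ∀ x y, IntervalIntegrable (psi (s + 1) a b c) volume x y :=
      fun x y => ih.2.intervalIntegrable x y
    exact ⟨h1, (intervalIntegral.continuous_primitive h1 0).sub continuous_const⟩

lemma psi_sub (s : ℕ) (x y : ℝ) :
    psi (s + 1) a b c y - psi (s + 1) a b c x = ∫ t in x..y, psi s a b c t := by
  have h := (psi_reg (a := a) (b := b) (c := c) s).1
  have := intervalIntegral.integral_interval_sub_left (h 0 y) (h 0 x)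
  rw [← this]
  simp only [psi]; ring

lemma psi_deriv (s : ℕ) (t : ℝ) : HasDerivAt (psi (s + 2) a b c) (psi (s + 1) a b c t) t := by
  have h := (psi_reg (a := a) (b := b) (c := c) s).2
  have := intervalIntegral.integral_hasDerivAt_right (h.intervalIntegrable 0 t)
    (h.stronglyMeasurableAtFilter _ _) h.continuousAt
  exact this.sub_const _

lemma psi_mean (hL : 0 < a + b + c) (s : ℕ) :
    ∫ t in (0:ℝ)..(4 * (a + b + c)), psi (s + 1) a b c t = 0 := by
  have h := (psi_reg (a := a) (b := b) (c := c) s).1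
  simp only [psi]
  rw [intervalIntegral.integral_sub
    ((intervalIntegral.continuous_primitive h 0).intervalIntegrable _ _) (by simp)]
  rw [intervalIntegral.integral_const, smul_eq_mul]
  field_simp
  ring

lemma psi_anti (ha : 0 ≤ a) (hL : 0 < a + b + c) (s : ℕ) (t : ℝ) :
    psi s a b c (t + 2 * (a + b + c)) = - psi s a b c t := by
  induction s generalizing t with
  | zero => exact psiZero_anti ha hL t
  | succ s ih =>
    set K := psi (s + 1) a b c (0 + 2 * (a + b + c)) + psi (s + 1) a b c 0 with hK
    have hconst : ∀ t, psi (s + 1) a b c (t + 2 * (a + b + c)) = K - psi (s + 1) a b c t := by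
      intro t
      have e1 := psi_sub (a := a) (b := b) (c := c) s (0 + 2 * (a + b + c)) (t + 2 * (a + b + c))
      have e2 := psi_sub (a := a) (b := b) (c := c) s 0 t
      rw [← intervalIntegral.integral_comp_add_right] at e1
      simp only [ih] at e1
      rw [intervalIntegral.integral_neg, ← e2] at e1
      linarith
    have hm := psi_mean hL s
    have hcont := (psi_reg (a := a) (b := b) (c := c) s).2
    rw [← intervalIntegral.integral_add_adjacent_intervals (b := 2 * (a + b + c))
      (hcont.intervalIntegrable _ _) (hcont.intervalIntegrable _ _)] at hm
    have e3 : ∫ t in (2 * (a + b + c))..(4 * (a + b + c)), psi (s + 1) a b c t =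
        ∫ t in (0:ℝ)..(2 * (a + b + c)), psi (s + 1) a b c (t + 2 * (a + b + c)) := by
      rw [intervalIntegral.integral_comp_add_right]; congr 1 <;> ring
    rw [e3] at hm
    simp only [hconst] at hm
    rw [intervalIntegral.integral_sub (by simp) (hcont.intervalIntegrable _ _),
      intervalIntegral.integral_const, smul_eq_mul] at hm
    have : K = 0 := by
      have h2 : (2 * (a + b + c)) * K = 0 := by linarith
      rcases mul_eq_zero.1 h2 with h | h
      · linarith
      · exact h
    rw [hconst, this, zero_sub]

lemma psi_odd (ha : 0 ≤ a) (hL : 0 < a + b + c) (s : ℕ) (x : ℝ) :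
    psi s a b c (-x + s * (a + b + c)) = - psi s a b c (x + s * (a + b + c)) := by
  induction s generalizing x with
  | zero => simpa [psi] using psiZero_odd ha hL x
  | succ s ih =>
    set m : ℝ := ((s + 1 : ℕ) : ℝ) * (a + b + c) with hm
    have hm' : m = s * (a + b + c) + (a + b + c) := by rw [hm]; push_cast; ring
    have hsym : ∀ u, psi s a b c (u + m) = psi s a b c (m - u) := by
      intro u
      have e1 := ih (-(u + (a + b + c)))
      have e2 := psi_anti ha hL s (-(u + (a + b + c)) + s * (a + b + c))
      rw [neg_neg] at e1
      rw [hm', show u + (s * (a + b + c) + (a + b + c)) = u + (a + b + c) + s * (a + b + c) by ring,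
        e1, ← e2]
      congr 1; ring
    have hx : ∀ x, psi (s + 1) a b c (-x + m) = 2 * psi (s + 1) a b c m
        - psi (s + 1) a b c (x + m) := by
      intro x
      have e1 := psi_sub (a := a) (b := b) (c := c) s (0 + m) (x + m)
      have e2 := psi_sub (a := a) (b := b) (c := c) s (m - x) (m - 0)
      rw [← intervalIntegral.integral_comp_add_right] at e1
      rw [← intervalIntegral.integral_comp_sub_left] at e2
      simp only [hsym] at e1
      rw [← e2] at e1
      rw [show -x + m = m - x by ring]
      simp only [zero_add, sub_zero] at e1
      linarith
    have h0 : psi (s + 1) a b c m = 0 := by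
      have e1 := hx (a + b + c)
      have e2 := psi_anti ha hL (s + 1) (-(a + b + c) + m)
      rw [show -(a + b + c) + m + 2 * (a + b + c) = (a + b + c) + m by ring] at e2
      linarith
    rw [hx, h0]; ring

/-- centred and scaled spline -/
noncomputable def phi (α a b c : ℝ) (s : ℕ) (x : ℝ) : ℝ := α * psi s a b c (x + s * (a + b + c))

lemma phi_odd (α : ℝ) (ha : 0 ≤ a) (hL : 0 < a + b + c) (s : ℕ) (x : ℝ) :
    phi α a b c s (-x) = - phi α a b c s x := by
  unfold phi; rw [psi_odd ha hL]; ring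

lemma phi_even (α : ℝ) (ha : 0 ≤ a) (hL : 0 < a + b + c) (s : ℕ) (x : ℝ) :
    phi α a b c s (2 * (a + b + c) - x) = phi α a b c s x := by
  have h := phi_odd α ha hL s (-x)
  rw [neg_neg] at h
  rw [h]
  unfold phi
  rw [show 2 * (a + b + c) - x + s * (a + b + c) = (-x + s * (a + b + c)) + 2 * (a + b + c)
    by ring, psi_anti ha hL]; ring

lemma phi_deriv (α : ℝ) (s : ℕ) (x : ℝ) :
    HasDerivAt (phi α a b c (s + 2)) (phi α a b c (s + 1) (x + (a + b + c))) x := by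
  have h := ((psi_deriv (a := a) (b := b) (c := c) s
    (x + (s + 2 : ℕ) * (a + b + c))).comp_add_const x ((s + 2 : ℕ) * (a + b + c))).const_mul α
  unfold phi
  refine h.congr_deriv ?_
  congr 2; push_cast; ring

lemma phi_one (α : ℝ) (ha : 0 ≤ a) (hb : 0 < b) (hc : 0 ≤ c) :
    (∀ x, 0 ≤ x → x ≤ c → phi α a b c 1 x = 0) ∧
    (∀ x, c ≤ x → x ≤ c + b → phi α a b c 1 x = α * (x - c)) ∧
    (∀ x, c + b ≤ x → x ≤ a + b + c → phi α a b c 1 x = α * b) := by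
  have hL : 0 < a + b + c := by linarith
  have h0 : psi 1 a b c (a + b + c) = 0 := by
    have := psi_odd ha hL 1 0
    simp at this; linarith
  have hpz : ∀ t, a + b + c < t → t < 2 * (a + b + c) →
      psi 0 a b c t = psiBase a b (2 * (a + b + c) - t) := by
    intro t h1 h2
    change psiZero a b c t = _
    rw [psiZero_lo hL (by linarith) h2.le, psiHalf, if_neg (by linarith)]
  have A : ∀ x, 0 ≤ x → x ≤ c → psi 1 a b c (x + (a + b + c)) = 0 := by
    intro x h1 h2
    have e := psi_sub (a := a) (b := b) (c := c) 0 (a + b + c) (x + (a + b + c))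
    rw [intervalIntegral.integral_congr_Ioo_of_le (g := fun _ => (0:ℝ)) (by linarith)] at e
    · simp at e; linarith
    · intro t ht
      rw [hpz t ht.1 (by linarith [ht.2]), psiBase, if_neg (by linarith [ht.2]),
        if_neg (by linarith [ht.2])]
  have B : ∀ x, c ≤ x → x ≤ c + b → psi 1 a b c (x + (a + b + c)) = x - c := by
    intro x h1 h2
    have e := psi_sub (a := a) (b := b) (c := c) 0 (c + (a + b + c)) (x + (a + b + c))
    rw [intervalIntegral.integral_congr_Ioo_of_le (g := fun _ => (1:ℝ)) (by linarith)] at e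
    · simp at e; linarith [A c hc le_rfl]
    · intro t ht
      rw [hpz t (by linarith [ht.1]) (by linarith [ht.2]), psiBase, if_neg (by linarith [ht.2]),
        if_pos (by linarith [ht.1])]
  have C : ∀ x, c + b ≤ x → x ≤ a + b + c → psi 1 a b c (x + (a + b + c)) = b := by
    intro x h1 h2
    have e := psi_sub (a := a) (b := b) (c := c) 0 (c + b + (a + b + c)) (x + (a + b + c))
    rw [intervalIntegral.integral_congr_Ioo_of_le (g := fun _ => (0:ℝ)) (by linarith)] at e
    · simp at e; linarith [B (c + b) (by linarith) le_rfl]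
    · intro t ht
      rw [hpz t (by linarith [ht.1]) (by linarith [ht.2]), psiBase, if_pos (by linarith [ht.1])]
  refine ⟨?_, ?_, ?_⟩ <;> intro x h1 h2 <;> simp only [phi, Nat.cast_one, one_mul]
  · rw [A x h1 h2, mul_zero]
  · rw [B x h1 h2]
  · rw [C x h1 h2]

lemma prof_one {α : ℝ} (hα : 0 < α) (ha : 0 ≤ a) (hb : 0 < b) (hc : 0 ≤ c) :
    Prof (phi α a b c 1) (a + b + c) c (c + b) := by
  have hL : 0 < a + b + c := by linarith
  obtain ⟨A, B, C⟩ := phi_one (a := a) (b := b) (c := c) α ha hb hc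
  refine ⟨hc, by linarith, by linarith, phi_odd α ha hL 1, phi_even α ha hL 1, A, ?_, ?_, ?_⟩
  · intro x h1 h2
    rw [C x h1 h2, C _ (by linarith) le_rfl]
  · intro x hx y hy hxy
    rw [B x hx.1 hx.2, B y hy.1 hy.2]
    exact mul_lt_mul_of_pos_left (by linarith) hα
  · unfold phi
    exact continuous_const.mul
      ((psi_reg 0).2.comp (continuous_id.add continuous_const))

lemma prof_two {α : ℝ} (hα : 0 < α) (ha : 0 ≤ a) (hb : 0 < b) (hc : 0 ≤ c) :
    Prof (phi α a b c 2) (a + b + c) 0 (a + b + c - c) := by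
  have hL : 0 < a + b + c := by linarith
  exact (prof_one hα ha hb hc).step (phi_deriv α 0) (phi_odd α ha hL 2) (phi_even α ha hL 2)

lemma prof_three {α : ℝ} (hα : 0 < α) (ha : 0 ≤ a) (hb : 0 < b) (hc : 0 ≤ c) (n : ℕ) :
    Prof (phi α a b c (n + 3)) (a + b + c) 0 (a + b + c) := by
  have hL : 0 < a + b + c := by linarith
  induction n with
  | zero =>
    have := (prof_two hα ha hb hc).step (phi_deriv α 1) (phi_odd α ha hL 3) (phi_even α ha hL 3)
    rwa [sub_zero] at this
  | succ n ih =>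
    have := ih.step (phi_deriv α (n + 2)) (phi_odd α ha hL (n + 4)) (phi_even α ha hL (n + 4))
    rwa [sub_zero] at this

lemma psi_iter (α : ℝ) (m k : ℕ) : iteratedDeriv k (fun t => α * psi (m + 1 + k) a b c t) =
    fun t => α * psi (m + 1) a b c t := by
  induction k with
  | zero => simp
  | succ k ih =>
    rw [iteratedDeriv_succ']
    have : deriv (fun t => α * psi (m + 1 + (k + 1)) a b c t) =
        fun t => α * psi (m + 1 + k) a b c t := by
      ext t
      have := (psi_deriv (a := a) (b := b) (c := c) (m + k) t).const_mul α
      rw [show m + 1 + (k + 1) = m + k + 2 by ring, show m + 1 + k = m + k + 1 by ring]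
      exact this.deriv
    rw [this, ih]

lemma psi_one_lip {α : ℝ} (hα : 0 < α) :
    LipschitzWith ⟨α, hα.le⟩ (fun t => α * psi 1 a b c t) := by
  refine LipschitzWith.of_dist_le_mul fun x y => ?_
  rw [Real.dist_eq, Real.dist_eq, ← mul_sub, abs_mul, abs_of_pos hα, psi_sub 0 y x]
  refine mul_le_mul_of_nonneg_left ?_ hα.le
  have := intervalIntegral.norm_integral_le_of_norm_le_const (a := y) (b := x)
    (f := psi 0 a b c) (C := 1) (fun t _ => psiZero_abs t)
  simpa using this

end Psi

section Main

lemma lip_of_deriv {h : ℝ → ℝ} {K : NNReal} {m : ℝ} (hl : LipschitzWith K h)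
    (hm : ∀ x, |deriv h x| ≤ m) (x y : ℝ) : |h x - h y| ≤ m * |x - y| := by
  have hac : AbsolutelyContinuousOnInterval h y x :=
    (hl.lipschitzOnWith (s := uIcc y x)).absolutelyContinuousOnInterval
  rw [← hac.integral_deriv_eq_sub]
  exact intervalIntegral.norm_integral_le_of_norm_le_const (f := deriv h) (C := m) (fun t _ => hm t)

lemma lip_of_hasDeriv {h h' : ℝ → ℝ} {m : ℝ} (hd : ∀ x, HasDerivAt h (h' x) x)
    (hm : ∀ x, |h' x| ≤ m) (x y : ℝ) : |h x - h y| ≤ m * |x - y| := by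
  exact convex_univ.norm_image_sub_le_of_norm_hasDerivWithin_le
    (fun t _ => (hd t).hasDerivWithinAt) (fun t _ => hm t) (mem_univ y) (mem_univ x)

lemma findiff (N : ℕ) : ∀ (G : ℕ → ℝ → ℝ) (C : ℝ),
    (∀ i < N, ∀ x, HasDerivAt (G i) (G (i + 1) x) x) → (∀ x, |G 0 x| ≤ C) →
    ∀ t : ℝ, ∃ θ : ℝ, t ≤ θ ∧ θ ≤ t + N ∧ |G N θ| ≤ 2 ^ N * C := by
  induction N with
  | zero => intro G C _ hC t; exact ⟨t, le_rfl, by simp, by simpa using hC t⟩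
  | succ N ih =>
    intro G C hd hC t
    obtain ⟨θ, h1, h2, h3⟩ := ih (fun i x => G i (x + 1) - G i x) (2 * C)
      (fun i hi x => ((hd i (by omega) (x + 1)).comp_add_const x 1).sub (hd i (by omega) x))
      (fun x => by
        have a1 := abs_le.1 (hC (x + 1))
        have a2 := abs_le.1 (hC x)
        rw [abs_le]; constructor <;> linarith) t
    obtain ⟨y, hy, hy'⟩ := exists_hasDerivAt_eq_slope (G N) (G (N + 1)) (show θ < θ + 1 by linarith)
      (fun x _ => (hd N (by omega) x).continuousAt.continuousWithinAt)
      (fun x _ => hd N (by omega) x)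
    refine ⟨y, by linarith [hy.1], by push_cast; linarith [hy.2], ?_⟩
    rw [hy', add_sub_cancel_left, div_one, pow_succ]
    linarith

lemma all_bdd (N : ℕ) : ∀ (G : ℕ → ℝ → ℝ) (C K : ℝ), 0 ≤ K →
    (∀ i < N, ∀ x, HasDerivAt (G i) (G (i + 1) x) x) → (∀ x, |G 0 x| ≤ C) →
    (∀ x y, |G N x - G N y| ≤ K * |x - y|) → ∀ i ≤ N, ∃ B, ∀ x, |G i x| ≤ B := by
  induction N with
  | zero =>
    intro G C K _ _ hC _ i hi
    obtain rfl : i = 0 := by omega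
    exact ⟨C, hC⟩
  | succ N ih =>
    intro G C K hK hd hC hl i hi
    have hB : ∀ x, |G (N + 1) x| ≤ 2 ^ (N + 1) * C + K * ((N + 1 : ℕ) : ℝ) := by
      intro x
      obtain ⟨θ, h1, h2, h3⟩ := findiff (N + 1) G C hd hC x
      have h4 := hl x θ
      have h5 : |x - θ| ≤ ((N + 1 : ℕ) : ℝ) := by rw [abs_le]; constructor <;> linarith
      have h6 := mul_le_mul_of_nonneg_left h5 hK
      have h7 := abs_sub_abs_le_abs_sub (G (N + 1) x) (G (N + 1) θ)
      linarith
    rcases Nat.lt_or_ge N i with h | h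
    · obtain rfl : i = N + 1 := by omega
      exact ⟨_, hB⟩
    · exact ih G C _ ((abs_nonneg _).trans (hB 0)) (fun i hi => hd i (by omega)) hC
        (lip_of_hasDeriv (hd N (by omega)) hB) i h

variable {α a b c : ℝ}

/-- the class of functions at level `n + 2` -/
def Cl (α a b c : ℝ) : ℕ → (ℝ → ℝ) → Prop
  | 0, g => ∃ h : ℝ → ℝ, (∀ x, HasDerivAt g (h x) x) ∧ (∀ x y, |h x - h y| ≤ α * |x - y|) ∧
      (a = 0 ∨ ∀ x, |h x| ≤ phi α a b c 1 (a + b + c)) ∧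
      (c = 0 ∨ ∀ x, |g x| ≤ phi α a b c 2 (a + b + c))
  | n + 1, f => ∃ f' : ℝ → ℝ, (∀ x, HasDerivAt f (f' x) x) ∧ (∃ C, ∀ x, |f' x| ≤ C) ∧
      Cl α a b c n f'

lemma scale_le {κ u v : ℝ} (h : |κ| ≤ 1) (hu : |u| ≤ v) : |κ * u| ≤ v := by
  rw [abs_mul]
  nlinarith [abs_nonneg u, abs_nonneg κ]

lemma deriv_refl {f f' : ℝ → ℝ} (hf : ∀ x, HasDerivAt f (f' x) x) (κ x : ℝ) :
    HasDerivAt (fun x => κ * f (-x)) (-κ * f' (-x)) x := by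
  have h1 := (refl_deriv hf x).const_mul (-κ)
  simpa using h1

lemma Cl.sym (n : ℕ) : ∀ (f : ℝ → ℝ) (κ : ℝ), |κ| ≤ 1 → Cl α a b c n f →
    Cl α a b c n (fun x => κ * f x) ∧ Cl α a b c n (fun x => κ * f (-x)) := by
  induction n with
  | zero =>
    rintro f κ hκ ⟨h, h1, h2, h3, h4⟩
    have hκ' : |-κ| ≤ 1 := by rwa [abs_neg]
    refine ⟨⟨fun x => κ * h x, fun x => (h1 x).const_mul κ, ?_, ?_, ?_⟩,
      ⟨fun x => -κ * h (-x), deriv_refl h1 κ, ?_, ?_, ?_⟩⟩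
    · intro x y; rw [← mul_sub]; exact scale_le hκ (h2 x y)
    · exact h3.imp id fun h x => scale_le hκ (h x)
    · exact h4.imp id fun h x => scale_le hκ (h x)
    · intro x y
      rw [← mul_sub]
      have := h2 (-x) (-y)
      rw [show -x - -y = -(x - y) by ring, abs_neg] at this
      exact scale_le hκ' this
    · exact h3.imp id fun h x => scale_le hκ' (h _)
    · exact h4.imp id fun h x => scale_le hκ (h _)
  | succ n ih =>
    rintro f κ hκ ⟨f', h1, ⟨C, hC⟩, h2⟩
    have hκ' : |-κ| ≤ 1 := by rwa [abs_neg]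
    exact ⟨⟨fun x => κ * f' x, fun x => (h1 x).const_mul κ, ⟨C, fun x => scale_le hκ (hC x)⟩,
      (ih f' κ hκ h2).1⟩, ⟨fun x => -κ * f' (-x), deriv_refl h1 κ,
      ⟨C, fun x => scale_le hκ' (hC _)⟩, (ih f' (-κ) hκ' h2).2⟩⟩

lemma base_cmp (ha : 0 ≤ a) (hb : 0 < b) (hc : 0 ≤ c) {h : ℝ → ℝ}
    (hl : ∀ x y, |h x - h y| ≤ α * |x - y|) : Cmp h (phi α a b c 1) c (c + b) := by
  obtain ⟨-, B, -⟩ := phi_one (a := a) (b := b) (c := c) α ha hb hc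
  intro ξ η s h1 h2 h3 h4
  rw [B η (by linarith) h3] at h4
  rw [B (η - s) h2 (by linarith)]
  have := hl ξ (ξ - s)
  rw [sub_sub_cancel, abs_of_nonneg h1] at this
  have := (abs_le.1 this).2
  linarith

def rho (a b c : ℝ) (n : ℕ) : ℝ := if n = 0 then a + b + c - c else a + b + c

lemma prof_all (hα : 0 < α) (ha : 0 ≤ a) (hb : 0 < b) (hc : 0 ≤ c) (n : ℕ) :
    Prof (phi α a b c (n + 2)) (a + b + c) 0 (rho a b c n) := by
  cases n with
  | zero => simpa [rho] using prof_two hα ha hb hc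
  | succ n => simpa [rho] using prof_three hα ha hb hc n

lemma main_cmp (hα : 0 < α) (ha : 0 ≤ a) (hb : 0 < b) (hc : 0 ≤ c) (n : ℕ) : ∀ f : ℝ → ℝ,
    Cl α a b c n f → (∀ x, |f x| ≤ phi α a b c (n + 2) (a + b + c)) →
    Cmp f (phi α a b c (n + 2)) (-rho a b c n) (rho a b c n) := by
  have hL : 0 < a + b + c := by linarith
  induction n with
  | zero =>
    rintro f ⟨h, h1, h2, h3, h4⟩ hf
    have hlip : ∀ κ, 0 < κ → κ < 1 → ∀ x y, |κ * h x - κ * h y| ≤ α * |x - y| := by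
      intro κ k0 k1 x y
      rw [← mul_sub]; exact scale_le (by rw [abs_of_pos k0]; exact k1.le) (h2 x y)
    refine stepB (prof_one hα ha hb hc) (prof_two hα ha hb hc) (phi_deriv α 0) h1 ?_ ?_ hf ?_
    · exact fun κ k0 k1 => base_cmp ha hb hc (hlip κ k0 k1)
    · intro κ k0 k1
      refine base_cmp ha hb hc fun x y => ?_
      have := hlip κ k0 k1 (-x) (-y)
      rwa [show -x - -y = -(x - y) by ring, abs_neg] at this
    · rcases h3 with h3 | h3
      · left; rw [h3]; ring
      · exact Or.inr h3
  | succ n ih =>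
    rintro f ⟨f', h1, hbd, h2⟩ hf
    have hρ0 : 0 ≤ rho a b c n := by unfold rho; split_ifs <;> linarith
    have hp := prof_all hα ha hb hc n
    have hP : Prof (phi α a b c (n + 1 + 2)) (a + b + c) 0 (a + b + c) := prof_three hα ha hb hc n
    have hd : ∀ x, HasDerivAt (phi α a b c (n + 1 + 2)) (phi α a b c (n + 2) (x + (a + b + c))) x :=
      phi_deriv α (n + 1)
    have hall : ∀ κ, |κ| ≤ 1 → (∀ x, |κ * f' x| ≤ phi α a b c (n + 2) (a + b + c)) →
        Cmp (fun x => κ * f' x) (phi α a b c (n + 2)) 0 (rho a b c n) ∧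
        Cmp (fun x => κ * f' (-x)) (phi α a b c (n + 2)) 0 (rho a b c n) := by
      intro κ k1 k2
      have := Cl.sym n f' κ k1 h2
      exact ⟨(ih _ this.1 k2).mono (by linarith) le_rfl,
        (ih _ this.2 fun x => k2 (-x)).mono (by linarith) le_rfl⟩
    have hb' : ∀ x, |f' x| ≤ phi α a b c (n + 2) (a + b + c) := by
      by_cases hr : rho a b c n = a + b + c
      · rw [hr] at hp hall
        refine stepA hp hP hd h1 hbd ?_ hf
        intro κ k0 k1 k2
        have e1 := hall κ (by rwa [abs_of_pos k0]) k2
        have e2 := hall (-κ) (by rwa [abs_neg, abs_of_pos k0]) (by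
          intro x; rw [neg_mul, abs_neg]; exact k2 x)
        refine ⟨e1.1, e1.2, ?_, ?_⟩
        · simpa using e2.1
        · simpa using e2.2
      · have hn : n = 0 := by
          by_contra hn
          exact hr (by simp [rho, hn])
        have hc0 : c ≠ 0 := by
          intro h0
          exact hr (by simp [rho, hn, h0])
        subst hn
        obtain ⟨_, _, _, _, h4⟩ := h2
        exact h4.resolve_left hc0
    have hk : ∀ κ : ℝ, 0 < κ → κ < 1 → _ := fun κ k0 k1 =>
      hall κ (by rw [abs_of_pos k0]; exact k1.le)
        (fun x => scale_le (by rw [abs_of_pos k0]; exact k1.le) (hb' x))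
    have := stepB hp (by rw [sub_zero]; exact hP) hd h1 (fun κ k0 k1 => (hk κ k0 k1).1)
      (fun κ k0 k1 => (hk κ k0 k1).2) hf (Or.inr hb')
    simpa [rho] using this

lemma final_ineq (hα : 0 < α) (ha : 0 ≤ a) (hb : 0 < b) (hc : 0 ≤ c) (n : ℕ) {f f' : ℝ → ℝ}
    (hf' : ∀ x, HasDerivAt f (f' x) x)
    (hf : Cl α a b c (n + 1) f) (hbf : ∀ x, |f x| ≤ phi α a b c (n + 3) (a + b + c)) {ξ η : ℝ}
    (heq : f ξ = phi α a b c (n + 3) η) : |f' ξ| ≤ |phi α a b c (n + 2) (η + (a + b + c))| := by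
  have hL : 0 < a + b + c := by linarith
  have hp := prof_all hα ha hb hc n
  have hP := prof_three hα ha hb hc n
  obtain ⟨y, y1, y2, y3, y4⟩ := hp.reduce hP η
  rw [y4]
  rw [y3] at heq
  have s1 := Cl.sym (n + 1) f 1 (by simp) hf
  have s2 := Cl.sym (n + 1) f (-1) (by simp) hf
  have m : ∀ g, Cl α a b c (n + 1) g → (∀ x, |g x| ≤ phi α a b c (n + 3) (a + b + c)) →
      Cmp g (phi α a b c (n + 3)) (-(a + b + c)) (a + b + c) := by
    intro g hg hg'
    simpa [rho] using main_cmp hα ha hb hc (n + 1) g hg hg'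
  have c1 := m f hf hbf
  have c2 := m (fun x => -f (-x)) (by simpa using s2.2) (by intro x; rw [abs_neg]; exact hbf _)
  have c3 := m (fun x => f (-x)) (by simpa using s1.2) (fun x => hbf _)
  have c4 := m (fun x => -f x) (by simpa using s2.1) (by intro x; rw [abs_neg]; exact hbf _)
  have r1 := deriv_of_cmp hL hP.odd (phi_deriv α (n + 1) y) (hf' ξ) c1 c2 y1 y2 heq
  have hneg : HasDerivAt (fun x => f (-x)) (-f' ξ) (-ξ) := by
    have := deriv_refl hf' 1 (-ξ)
    simpa using this
  have r2 := deriv_of_cmp hL hP.odd (phi_deriv α (n + 1) y) hneg c3 (by simpa using c4) y1 y2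
    (by simpa using heq)
  refine le_trans ?_ (le_abs_self _)
  rw [abs_le]
  constructor
  · linarith
  · exact r1

lemma le_M {k : ℕ} {f : ℝ → ℝ} {C : ℝ} (h : ∀ x, |iteratedDeriv k f x| ≤ C) (x : ℝ) :
    |iteratedDeriv k f x| ≤ M k f :=
  le_ciSup (f := fun t => |iteratedDeriv k f t|) ⟨C, by rintro _ ⟨x, rfl⟩; exact h x⟩ x

lemma M_le {k : ℕ} {f : ℝ → ℝ} {C : ℝ} (h : ∀ x, |iteratedDeriv k f x| ≤ C) : M k f ≤ C :=
  ciSup_le h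

lemma psi_abs_le (hα : 0 < α) (ha : 0 ≤ a) (hb : 0 < b) (hc : 0 ≤ c) (m : ℕ) (x : ℝ) :
    |α * psi (m + 1) a b c x| ≤ phi α a b c (m + 1) (a + b + c) := by
  have e : α * psi (m + 1) a b c x = phi α a b c (m + 1) (x - (m + 1 : ℕ) * (a + b + c)) := by
    simp [phi]
  rw [e]
  cases m with
  | zero => exact (prof_one hα ha hb hc).abs_le _
  | succ m => exact (prof_all hα ha hb hc m).abs_le _

lemma core (n : ℕ) (f ψ : ℝ → ℝ) (hα : 0 < α) (ha : 0 ≤ a) (hb : 0 < b) (hc : 0 ≤ c)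
    (hf : MemL (n + 3) f) (hψ : ψ = fun t => α * psi (n + 3) a b c t)
    (h0 : M 0 f ≤ M 0 ψ) (h2 : c = 0 ∨ M (n + 1) f ≤ M (n + 1) ψ)
    (h1 : a = 0 ∨ M (n + 2) f ≤ M (n + 2) ψ) (hr : M (n + 3) f ≤ M (n + 3) ψ) {ξ η : ℝ}
    (heq : f ξ = ψ η) : |deriv f ξ| ≤ |deriv ψ η| := by
  obtain ⟨-, ⟨C, hC⟩, hcd, K, hK⟩ := hf
  simp only [show n + 3 - 1 = n + 2 by omega] at hcd hK
  have hder : ∀ i < n + 2, ∀ x, HasDerivAt (iteratedDeriv i f) (iteratedDeriv (i + 1) f x) x := by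
    intro i hi x
    rw [iteratedDeriv_succ]
    exact (hcd.differentiable_iteratedDeriv i (by exact_mod_cast hi) x).hasDerivAt
  have hbd := all_bdd (n + 2) (fun i => iteratedDeriv i f) C K K.2 hder (by simpa using hC)
    (fun x y => by simpa [Real.dist_eq] using hK.dist_le_mul x y)
  have hiter : ∀ m k, m + 1 + k = n + 3 → ∀ x, |iteratedDeriv k ψ x| ≤
      phi α a b c (m + 1) (a + b + c) := by
    intro m k hmk x
    rw [hψ, ← hmk, psi_iter]
    exact psi_abs_le hα ha hb hc m x
  have hbf : ∀ x, |f x| ≤ phi α a b c (n + 3) (a + b + c) := by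
    intro x
    have e1 := le_M (k := 0) (f := f) (C := C) (by simpa using hC) x
    rw [iteratedDeriv_zero] at e1
    exact e1.trans (h0.trans (M_le (hiter (n + 2) 0 (by omega))))
  have hrψ : M (n + 3) ψ ≤ α := by
    apply M_le
    intro x
    have e : iteratedDeriv (n + 2) ψ = fun t => α * psi 1 a b c t := by
      rw [hψ, show n + 3 = 0 + 1 + (n + 2) by omega, psi_iter]
    rw [iteratedDeriv_succ, e]
    exact norm_deriv_le_of_lipschitz (psi_one_lip hα)
  have hlip : ∀ x y, |iteratedDeriv (n + 2) f x - iteratedDeriv (n + 2) f y| ≤ α * |x - y| := by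
    apply lip_of_deriv hK
    intro x
    have hb1 : ∀ x, |iteratedDeriv (n + 3) f x| ≤ K := by
      intro x
      rw [iteratedDeriv_succ]
      exact norm_deriv_le_of_lipschitz hK
    have := le_M hb1 x
    rw [iteratedDeriv_succ] at this
    exact this.trans (hr.trans hrψ)
  have hcl : ∀ j i, i + j = n + 1 → Cl α a b c j (iteratedDeriv i f) := by
    intro j
    induction j with
    | zero =>
      intro i hi
      obtain rfl : i = n + 1 := by omega
      refine ⟨iteratedDeriv (n + 2) f, hder _ (by omega), hlip, ?_, ?_⟩
      · refine h1.imp id fun h x => ?_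
        obtain ⟨B, hB⟩ := hbd (n + 2) le_rfl
        exact (le_M hB x).trans (h.trans (M_le (hiter 0 (n + 2) (by omega))))
      · refine h2.imp id fun h x => ?_
        obtain ⟨B, hB⟩ := hbd (n + 1) (by omega)
        exact (le_M hB x).trans (h.trans (M_le (hiter 1 (n + 1) (by omega))))
    | succ j ih =>
      intro i hi
      exact ⟨iteratedDeriv (i + 1) f, hder _ (by omega), hbd (i + 1) (by omega),
        ih (i + 1) (by omega)⟩
  have hcl0 := hcl (n + 1) 0 (by omega)
  have hder0 := hder 0 (by omega)
  simp only [zero_add, iteratedDeriv_one, iteratedDeriv_zero] at hcl0 hder0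
  have hψη : ∀ η, ψ η = phi α a b c (n + 3) (η - (n + 3 : ℕ) * (a + b + c)) := by
    intro η; rw [hψ]; simp [phi]
  have hdψ : deriv ψ η = phi α a b c (n + 2) (η - (n + 3 : ℕ) * (a + b + c) + (a + b + c)) := by
    rw [hψ]
    rw [((psi_deriv (a := a) (b := b) (c := c) (n + 1) η).const_mul α).deriv]
    unfold phi
    congr 2; push_cast; ring
  rw [hdψ]
  exact final_ineq hα ha hb hc n hder0 hcl0 hbf (heq.trans (hψη η))

end Main

end Rodov

/-- **Comparison theorem for Rodov splines.** If `f ∈ L^r_{∞,∞}` and `ψ` is one of the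
splines `α ψ_r(a,b,0)`, `α ψ_r(0,b,c)`, `α ψ_r(a,b,c)` dominating the corresponding
norms of `f`, then `f ξ = ψ η` implies `|f' ξ| ≤ |ψ' η|`. -/
theorem stmt15 (r k : ℕ) (f ψ : ℝ → ℝ) (hf : MemL r f)
    (hcase :
      (∃ α a b : ℝ, 0 < α ∧ 0 < b ∧ 0 ≤ a ∧ 3 ≤ r ∧ 0 < k ∧ k < r - 1 ∧
        ψ = (fun t => α * psi r a b 0 t) ∧
        M 0 f ≤ M 0 ψ ∧ M (r - 1) f ≤ M (r - 1) ψ ∧ M r f ≤ M r ψ) ∨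
      (∃ α b c : ℝ, 0 < α ∧ 0 < b ∧ 0 ≤ c ∧ 4 ≤ r ∧ 0 < k ∧ k < r - 2 ∧
        ψ = (fun t => α * psi r 0 b c t) ∧
        M 0 f ≤ M 0 ψ ∧ M (r - 2) f ≤ M (r - 2) ψ ∧ M r f ≤ M r ψ) ∨
      (∃ α a b c : ℝ, 0 < α ∧ 0 < b ∧ 0 ≤ a ∧ 0 ≤ c ∧ 4 ≤ r ∧ 0 < k ∧ k < r - 2 ∧
        ψ = (fun t => α * psi r a b c t) ∧
        M 0 f ≤ M 0 ψ ∧ M (r - 2) f ≤ M (r - 2) ψ ∧ M (r - 1) f ≤ M (r - 1) ψ ∧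
          M r f ≤ M r ψ))
    (ξ η : ℝ) (heq : f ξ = ψ η) :
    |deriv f ξ| ≤ |deriv ψ η| := by
  rcases hcase with ⟨α, a, b, hα, hb, ha, hr, -, -, hψ, h0, h1, h2⟩ |
    ⟨α, b, c, hα, hb, hc, hr, -, -, hψ, h0, h1, h2⟩ |
    ⟨α, a, b, c, hα, hb, ha, hc, hr, -, -, hψ, h0, h1, h2, h3⟩
  · obtain ⟨n, rfl⟩ : ∃ n, r = n + 3 := ⟨r - 3, by omega⟩
    exact Rodov.core n f ψ hα ha hb le_rfl hf hψ h0 (Or.inl rfl) (Or.inr h1) h2 heq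
  · obtain ⟨n, rfl⟩ : ∃ n, r = n + 3 := ⟨r - 3, by omega⟩
    exact Rodov.core n f ψ hα le_rfl hb hc hf hψ h0 (Or.inr h1) (Or.inl rfl) h2 heq
  · obtain ⟨n, rfl⟩ : ∃ n, r = n + 3 := ⟨r - 3, by omega⟩
    exact Rodov.core n f ψ hα ha hb hc hf hψ h0 (Or.inr h1) (Or.inr h2) h3 heq
end

section
/- Let η ∈ (0,1), X = {f ∈ L^3_{∞,∞} : M_2(f)^{1−η} · M_3(f)^η ≤ 1}, and δ > 0. Then ω(D^1, X; δ) = sup{ α·(ab + b²/2) : α, b > 0, a ≥ 0, α·(a²b/2 + ab² + b³/3) = δ, α·b^{1−η} = 1 }, and this supremum is attained. -/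
open MeasureTheory Filter

lemma aux_mono {F F' : ℝ → ℝ} (h : ∀ x, HasDerivAt F (F' x) x) {u v : ℝ} (huv : u ≤ v)
    (h0 : ∀ x ∈ Set.Icc u v, 0 ≤ F' x) : F u ≤ F v := by
  have hm : MonotoneOn F (Set.Icc u v) := by
    apply monotoneOn_of_deriv_nonneg (convex_Icc u v)
    · exact fun x _ => (h x).continuousAt.continuousWithinAt
    · exact fun x _ => (h x).differentiableAt.differentiableWithinAt
    · intro x hx
      rw [(h x).deriv]
      exact h0 x (interior_subset hx)
  exact hm ⟨le_refl _, huv⟩ ⟨huv, le_refl _⟩ huv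

lemma hasDerivAt_A1 (x : ℝ) : HasDerivAt (fun x : ℝ => x * |x| / 2) |x| x := by
  rcases lt_trichotomy x 0 with h | h | h
  · have := ((hasDerivAt_id x).mul (hasDerivAt_abs_neg h)).div_const 2
    refine this.congr_deriv ?_
    simp [abs_of_neg h]
  · subst h
    rw [hasDerivAt_iff_isLittleO]
    simp only [sub_zero, abs_zero, mul_zero, zero_div, smul_zero]
    rw [Asymptotics.isLittleO_iff]
    intro c hc
    filter_upwards [Metric.ball_mem_nhds (0:ℝ) hc] with y hy
    rw [Metric.mem_ball, dist_zero_right, Real.norm_eq_abs] at hy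
    rw [Real.norm_eq_abs, Real.norm_eq_abs, abs_div, abs_mul, abs_abs, abs_two]
    nlinarith [abs_nonneg y, mul_nonneg (abs_nonneg y) (sub_nonneg.2 hy.le)]
  · have := ((hasDerivAt_id x).mul (hasDerivAt_abs_pos h)).div_const 2
    refine this.congr_deriv ?_
    simp [abs_of_pos h]

lemma hasDerivAt_A2 (x : ℝ) : HasDerivAt (fun x : ℝ => x * (x * |x| / 2) / 3) (x * |x| / 2) x := by
  have := ((hasDerivAt_id x).mul (hasDerivAt_A1 x)).div_const 3
  refine this.congr_deriv ?_
  simp; ring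

noncomputable def cc0 (b t : ℝ) : ℝ := (|t + b| - |t - b|) / 2
noncomputable def cc1 (b t : ℝ) : ℝ := ((t + b) * |t + b| / 2 - (t - b) * |t - b| / 2) / 2 - b ^ 2 / 2
noncomputable def cc2 (b t : ℝ) : ℝ := ((t + b) * ((t + b) * |t + b| / 2) / 3
  - (t - b) * ((t - b) * |t - b| / 2) / 3) / 2 - b ^ 2 / 2 * t

lemma hasDerivAt_cc1 (b t : ℝ) : HasDerivAt (cc1 b) (cc0 b t) t := by
  have h1 := (hasDerivAt_A1 (t + b)).comp_add_const t b
  have h2 := (hasDerivAt_A1 (t - b)).comp_sub_const t b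
  exact ((h1.sub h2).div_const 2).sub_const (b ^ 2 / 2)

lemma hasDerivAt_cc2 (b t : ℝ) : HasDerivAt (cc2 b) (cc1 b t) t := by
  have h1 := (hasDerivAt_A2 (t + b)).comp_add_const t b
  have h2 := (hasDerivAt_A2 (t - b)).comp_sub_const t b
  refine (((h1.sub h2).div_const 2).sub ((hasDerivAt_id t).const_mul (b ^ 2 / 2))).congr_deriv ?_
  simp [cc1]

lemma cc0_eq {b t : ℝ} (hb : 0 ≤ b) (ht : 0 ≤ t) : cc0 b t = min t b := by
  unfold cc0
  rw [abs_of_nonneg (by linarith : 0 ≤ t + b)]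
  rcases le_total t b with h | h
  · rw [min_eq_left h, abs_of_nonpos (by linarith)]; ring
  · rw [min_eq_right h, abs_of_nonneg (by linarith)]; ring

lemma cc0_bound {b : ℝ} (hb : 0 ≤ b) (t : ℝ) : |cc0 b t| ≤ b := by
  unfold cc0
  rw [abs_div, abs_two]
  have := abs_abs_sub_abs_le_abs_sub (t + b) (t - b)
  rw [show t + b - (t - b) = 2 * b by ring, abs_of_nonneg (by linarith : 0 ≤ 2 * b)] at this
  linarith

lemma cc0_lip (b s t : ℝ) : |cc0 b s - cc0 b t| ≤ |s - t| := by
  unfold cc0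
  have h1 := abs_abs_sub_abs_le_abs_sub (s + b) (t + b)
  have h2 := abs_abs_sub_abs_le_abs_sub (s - b) (t - b)
  rw [show s + b - (t + b) = s - t by ring] at h1
  rw [show s - b - (t - b) = s - t by ring] at h2
  rw [abs_le] at *
  constructor <;> linarith [h1.1, h1.2, h2.1, h2.2]

lemma cc_zero {b : ℝ} (hb : 0 ≤ b) : cc1 b 0 = 0 ∧ cc2 b 0 = 0 := by
  unfold cc1 cc2
  simp [abs_of_nonneg hb]
  constructor <;> ring

lemma cc2_small {b t : ℝ} (ht : 0 ≤ t) (h : t ≤ b) : cc2 b t = t ^ 3 / 6 := by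
  unfold cc2
  rw [abs_of_nonneg (by linarith : 0 ≤ t + b), abs_of_nonpos (by linarith : t - b ≤ 0)]; ring

lemma cc2_large {a b : ℝ} (ha : 0 ≤ a) (hb : 0 ≤ b) :
    cc2 b (a + b) = b * (a + b) ^ 2 / 2 - b ^ 2 * (a + b) / 2 + b ^ 3 / 6 := by
  unfold cc2
  rw [abs_of_nonneg (by linarith : 0 ≤ a + b + b), abs_of_nonneg (by linarith : 0 ≤ a + b - b)]
  ring

lemma cc1_large {a b : ℝ} (ha : 0 ≤ a) (hb : 0 ≤ b) :
    cc1 b (a + b) = a * b + b ^ 2 / 2 := by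
  unfold cc1
  rw [abs_of_nonneg (by linarith : 0 ≤ a + b + b), abs_of_nonneg (by linarith : 0 ≤ a + b - b)]
  ring

lemma cc0_neg (b t : ℝ) : cc0 b (-t) = - cc0 b t := by
  unfold cc0
  rw [show -t + b = -(t - b) by ring, show -t - b = -(t + b) by ring, abs_neg, abs_neg]; ring

lemma cc1_neg (b t : ℝ) : cc1 b (-t) = cc1 b t := by
  unfold cc1
  rw [show -t + b = -(t - b) by ring, show -t - b = -(t + b) by ring, abs_neg, abs_neg]; ring

lemma cc2_neg (b t : ℝ) : cc2 b (-t) = - cc2 b t := by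
  unfold cc2
  rw [show -t + b = -(t - b) by ring, show -t - b = -(t + b) by ring, abs_neg, abs_neg]; ring

lemma cc1_le {b t L : ℝ} (hb : 0 ≤ b) (ht : |t| ≤ L) : cc1 b t ≤ cc1 b L := by
  have : cc1 b t = cc1 b |t| := by
    rcases abs_choice t with h | h <;> rw [h]
    rw [cc1_neg]
  rw [this]
  apply aux_mono (hasDerivAt_cc1 b) ht
  intro x hx
  have hx0 : 0 ≤ x := (abs_nonneg t).trans hx.1
  rw [cc0_eq hb hx0]
  exact le_min hx0 hb

/-- the key pointwise inequality -/
lemma key_ineq {f g h : ℝ → ℝ} (hf : ∀ x, HasDerivAt f (g x) x) (hg : ∀ x, HasDerivAt g (h x) x)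
    {δ α b : ℝ} (hα : 0 ≤ α) (hb : 0 ≤ b) (h0 : ∀ x, |f x| ≤ δ) (h2 : ∀ x, |h x| ≤ α * b)
    (h3 : ∀ x y, |h x - h y| ≤ α * |x - y|) (t0 t : ℝ) (ht : 0 ≤ t) :
    g t0 * t ≤ δ + α * cc2 b t := by
  have hd1 : ∀ s, HasDerivAt (fun s => g (t0 + s) + g (t0 - s) - 2 * g t0 + 2 * α * cc1 b s)
      (h (t0 + s) - h (t0 - s) + 2 * α * cc0 b s) s := by
    intro s
    have e1 := (hg (t0 + s)).comp_const_add t0 s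
    have e2 := (hg (t0 - s)).comp_const_sub t0 s
    refine (((e1.add e2).sub_const (2 * g t0)).add
      ((hasDerivAt_cc1 b s).const_mul (2 * α))).congr_deriv ?_
    ring
  have hd0 : ∀ s, HasDerivAt (fun s => f (t0 + s) - f (t0 - s) - 2 * g t0 * s + 2 * α * cc2 b s)
      (g (t0 + s) + g (t0 - s) - 2 * g t0 + 2 * α * cc1 b s) s := by
    intro s
    have e1 := (hf (t0 + s)).comp_const_add t0 s
    have e2 := (hf (t0 - s)).comp_const_sub t0 s
    refine (((e1.sub e2).sub ((hasDerivAt_id s).const_mul (2 * g t0))).add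
      ((hasDerivAt_cc2 b s).const_mul (2 * α))).congr_deriv ?_
    simp
  obtain ⟨z1, z2⟩ := cc_zero hb
  have p1 : ∀ s, 0 ≤ s → 0 ≤ g (t0 + s) + g (t0 - s) - 2 * g t0 + 2 * α * cc1 b s := by
    intro s hs
    have := aux_mono hd1 hs (by
      intro x hx
      rw [cc0_eq hb hx.1]
      have a1 := abs_le.1 (h2 (t0 + x))
      have a2 := abs_le.1 (h2 (t0 - x))
      have a3 := abs_le.1 (h3 (t0 + x) (t0 - x))
      rw [show t0 + x - (t0 - x) = 2 * x by ring,
        abs_of_nonneg (by linarith [hx.1] : 0 ≤ 2 * x)] at a3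
      rcases le_total x b with hxb | hxb
      · rw [min_eq_left hxb]; nlinarith [a3.1]
      · rw [min_eq_right hxb]; nlinarith [a1.1, a2.2])
    simp only [add_zero, sub_zero, z1, mul_zero] at this
    linarith
  have := aux_mono hd0 ht (fun x hx => p1 x hx.1)
  simp only [add_zero, sub_zero, z2, mul_zero, sub_self] at this
  have b1 := abs_le.1 (h0 (t0 + t))
  have b2 := abs_le.1 (h0 (t0 - t))
  linarith [b1.2, b2.1]

lemma key_ineq_abs {f g h : ℝ → ℝ} (hf : ∀ x, HasDerivAt f (g x) x)
    (hg : ∀ x, HasDerivAt g (h x) x)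
    {δ α b : ℝ} (hα : 0 ≤ α) (hb : 0 ≤ b) (h0 : ∀ x, |f x| ≤ δ) (h2 : ∀ x, |h x| ≤ α * b)
    (h3 : ∀ x y, |h x - h y| ≤ α * |x - y|) (t0 t : ℝ) (ht : 0 ≤ t) :
    |g t0| * t ≤ δ + α * cc2 b t := by
  rcases abs_choice (g t0) with e | e <;> rw [e]
  · exact key_ineq hf hg hα hb h0 h2 h3 t0 t ht
  · refine key_ineq (f := fun x => - f x) (g := fun x => - g x) (h := fun x => - h x)
      (fun x => (hf x).neg) (fun x => (hg x).neg) hα hb ?_ ?_ ?_ t0 t ht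
    · intro x; rw [abs_neg]; exact h0 x
    · intro x; rw [abs_neg]; exact h2 x
    · intro x y
      rw [show -h x - -h y = -(h x - h y) by ring, abs_neg]; exact h3 x y

lemma bdd_second {f g h : ℝ → ℝ} (hf : ∀ x, HasDerivAt f (g x) x)
    (hg : ∀ x, HasDerivAt g (h x) x) {C K : ℝ} (hK : 0 ≤ K)
    (h0 : ∀ x, |f x| ≤ C) (h3 : ∀ x y, |h x - h y| ≤ K * |x - y|) (t : ℝ) :
    |h t| ≤ 4 * C + 3 * K := by
  have cf : ∀ s, ContinuousOn f s := fun s x _ => (hf x).continuousAt.continuousWithinAt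
  have cg : ∀ s, ContinuousOn g s := fun s x _ => (hg x).continuousAt.continuousWithinAt
  obtain ⟨u, hu, eu⟩ := exists_hasDerivAt_eq_slope f g (by linarith : t < t + 1) (cf _)
    (fun x _ => hf x)
  obtain ⟨v, hv, ev⟩ := exists_hasDerivAt_eq_slope f g (by linarith : t + 2 < t + 3) (cf _)
    (fun x _ => hf x)
  have huv : u < v := by linarith [hu.2, hv.1]
  obtain ⟨w, hw, ew⟩ := exists_hasDerivAt_eq_slope g h huv (cg _) (fun x _ => hg x)
  rw [show t + 1 - t = 1 by ring, div_one] at eu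
  rw [show t + 3 - (t + 2) = 1 by ring, div_one] at ev
  have hvu : 1 ≤ v - u := by linarith [hu.2, hv.1]
  rw [eq_div_iff (by linarith)] at ew
  have b1 := abs_le.1 (h0 t)
  have b2 := abs_le.1 (h0 (t + 1))
  have b3 := abs_le.1 (h0 (t + 2))
  have b4 := abs_le.1 (h0 (t + 3))
  have hw1 : |h w| ≤ 4 * C := by
    have : |h w| * (v - u) ≤ 4 * C := by
      rw [← abs_of_nonneg (by linarith : 0 ≤ v - u), ← abs_mul, ew, abs_le]
      constructor <;> linarith
    nlinarith [abs_nonneg (h w)]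
  have hw2 : |h t - h w| ≤ 3 * K := by
    refine (h3 t w).trans ?_
    have : |t - w| ≤ 3 := by
      rw [abs_le]; constructor <;> linarith [hw.1, hw.2, hu.1, hv.2]
    nlinarith
  have := abs_add_le (h t - h w) (h w)
  rw [sub_add_cancel] at this
  linarith

lemma unif_le {f : ℝ → ℝ} {C : ℝ} (h : ∀ t, |f t| ≤ C) : unif f ≤ C := ciSup_le h

lemma le_unif {f : ℝ → ℝ} {C : ℝ} (h : ∀ t, |f t| ≤ C) (t : ℝ) : |f t| ≤ unif f :=
  le_ciSup (f := fun t => |f t|) ⟨C, by rintro _ ⟨s, rfl⟩; exact h s⟩ t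

lemma deriv_bdd {h : ℝ → ℝ} {K : ℝ} (hK : 0 ≤ K) (hl : ∀ x y, |h x - h y| ≤ K * |x - y|) (t : ℝ) :
    |deriv h t| ≤ K := by
  have : LipschitzWith K.toNNReal h := LipschitzWith.of_dist_le_mul (fun x y => by
    rw [Real.dist_eq, Real.dist_eq, Real.coe_toNNReal _ hK]; exact hl x y)
  have := norm_deriv_le_of_lipschitz (x₀ := t) this
  rwa [Real.coe_toNNReal _ hK] at this

lemma lip_unif {h : ℝ → ℝ} {K : NNReal} (hl : LipschitzWith K h) (x y : ℝ) :
    |h x - h y| ≤ unif (deriv h) * |x - y| := by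
  have hac : AbsolutelyContinuousOnInterval h y x :=
    (hl.lipschitzOnWith (s := Set.uIcc y x)).absolutelyContinuousOnInterval
  rw [← hac.integral_deriv_eq_sub, ← Real.norm_eq_abs]
  apply intervalIntegral.norm_integral_le_of_norm_le_const
  intro t _
  exact le_unif (f := deriv h) (C := K) (fun s => norm_deriv_le_of_lipschitz hl) t

/-- the facts about members of the class -/
lemma memL_facts {f : ℝ → ℝ} (hf : MemL 3 f) : ∃ g h : ℝ → ℝ, (∀ x, HasDerivAt f (g x) x) ∧
    (∀ x, HasDerivAt g (h x) x) ∧ M 1 f = unif g ∧ iteratedDeriv 1 f = g ∧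
    (∀ x, |h x| ≤ M 2 f) ∧ (∀ x y, |h x - h y| ≤ M 3 f * |x - y|) ∧ (∀ x, |f x| ≤ M 0 f) ∧
    0 ≤ M 3 f := by
  obtain ⟨hc, ⟨C, hC⟩, hd, K, hK⟩ := hf
  have e1 : iteratedDeriv 1 f = deriv f := iteratedDeriv_one
  have e2 : iteratedDeriv 2 f = deriv (deriv f) := by
    rw [iteratedDeriv_succ, e1]
  have e3 : iteratedDeriv 3 f = deriv (deriv (deriv f)) := by
    rw [iteratedDeriv_succ, e2]
  have hd' : ContDiff ℝ 2 f := hd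
  have d1 : Differentiable ℝ f := hd'.differentiable (by norm_num)
  have d2 : Differentiable ℝ (deriv f) := by
    have := hd'.differentiable_iteratedDeriv 1 (by norm_num)
    rwa [e1] at this
  have hK' : LipschitzWith K (deriv (deriv f)) := by
    rw [← e2]; exact hK
  have h1 : ∀ x, HasDerivAt f (deriv f x) x := fun x => (d1 x).hasDerivAt
  have h2 : ∀ x, HasDerivAt (deriv f) (deriv (deriv f) x) x := fun x => (d2 x).hasDerivAt
  have hKl : ∀ x y, |deriv (deriv f) x - deriv (deriv f) y| ≤ K * |x - y| := fun x y => by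
    have := hK'.dist_le_mul x y
    rwa [Real.dist_eq, Real.dist_eq] at this
  refine ⟨deriv f, deriv (deriv f), h1, h2, by rw [M, e1], e1, ?_, ?_, ?_, ?_⟩
  · intro x
    rw [M, e2]
    exact le_unif (bdd_second h1 h2 K.2 hC hKl) x
  · intro x y
    rw [M, e3]
    exact lip_unif hK' x y
  · intro x
    rw [M, iteratedDeriv_zero]
    exact le_unif hC x
  · exact Real.iSup_nonneg (fun _ => abs_nonneg _)

lemma aux_const {F F' : ℝ → ℝ} (h : ∀ x, HasDerivAt F (F' x) x) {u v : ℝ} 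
    (h0 : ∀ x ∈ Set.uIcc u v, F' x = 0) : F u = F v := by
  rcases le_total u v with huv | huv
  · rw [Set.uIcc_of_le huv] at h0
    apply le_antisymm
    · exact aux_mono h huv (fun x hx => (h0 x hx).ge)
    · have := aux_mono (fun x => (h x).neg) huv (fun x hx => by rw [h0 x hx]; simp)
      simpa using this
  · rw [Set.uIcc_of_ge huv] at h0
    apply le_antisymm
    · have := aux_mono (fun x => (h x).neg) huv (fun x hx => by rw [h0 x hx]; simp)
      simpa using this
    · exact aux_mono h huv (fun x hx => (h0 x hx).ge)

lemma exists_tri {L : ℝ} (hL : 0 < L) : ∃ τ : ℝ → ℝ, LipschitzWith 1 τ ∧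
    (∀ t, τ (2 * L - t) = τ t) ∧ (∀ t, τ (-(2 * L) - t) = τ t) ∧
    ∀ t ∈ Set.Icc (-L) L, τ t = t := by
  set S : Set ℝ := Set.range (fun k : ℤ => -L + 4 * L * k) with hS
  have hne : S.Nonempty := ⟨_, ⟨0, rfl⟩⟩
  have hrefl : ∀ c : ℝ, (∃ m : ℤ, c = -(2 * L) + 4 * L * m) →
      ∀ t, Metric.infDist (c - t) S = Metric.infDist t S := by
    rintro c ⟨m, hm⟩ t
    have hi : (fun x => c - x) '' S = S := by
      ext x
      constructor
      · rintro ⟨_, ⟨k, rfl⟩, rfl⟩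
        refine ⟨m - k, ?_⟩
        push_cast
        simp only [hm]
        ring
      · rintro ⟨k, rfl⟩
        refine ⟨_, ⟨m - k, rfl⟩, ?_⟩
        push_cast
        simp only [hm]
        ring
    have := Metric.infDist_image (IsometryEquiv.subLeft c).isometry (x := t) (t := S)
    simp only [IsometryEquiv.subLeft_apply] at this
    rw [← this]
    congr 1
    exact hi.symm
  refine ⟨fun t => Metric.infDist t S - L, ?_, ?_, ?_, ?_⟩
  · have := (Metric.lipschitz_infDist_pt S)
    refine LipschitzWith.of_dist_le_mul (fun x y => ?_)
    have := this.dist_le_mul x y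
    simpa [Real.dist_eq] using this
  · intro t
    simp only
    rw [hrefl (2 * L) ⟨1, by push_cast; ring⟩]
  · intro t
    simp only
    rw [hrefl (-(2 * L)) ⟨0, by push_cast; ring⟩]
  · intro t ht
    have : Metric.infDist t S = t + L := by
      apply le_antisymm
      · have := Metric.infDist_le_dist_of_mem (x := t) (show (-L + 4 * L * (0:ℤ)) ∈ S from ⟨0, rfl⟩)
        rw [Real.dist_eq] at this
        push_cast at this
        rwa [show t - (-L + 4 * L * 0) = t + L by ring, abs_of_nonneg (by linarith [ht.1])] at this
      · rw [Metric.le_infDist hne]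
        rintro _ ⟨k, rfl⟩
        rw [Real.dist_eq, le_abs]
        rcases le_or_gt k 0 with hk | hk
        · left
          have : (k:ℝ) ≤ 0 := by exact_mod_cast hk
          nlinarith
        · right
          have : (1:ℝ) ≤ k := by exact_mod_cast hk
          nlinarith [ht.2]
    simp only
    rw [this]; ring

lemma refl_bound {L δ : ℝ} (hL : 0 < L) {f : ℝ → ℝ} (r1 : ∀ t, f (2 * L - t) = f t)
    (r2 : ∀ t, f (-(2 * L) - t) = f t) (h : ∀ t ∈ Set.Icc (-L) L, |f t| ≤ δ) (t : ℝ) :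
    |f t| ≤ δ := by
  have hp : Function.Periodic f (4 * L) := by
    intro x
    have := r1 (-(2 * L) - x)
    rw [r2, show 2 * L - (-(2 * L) - x) = x + 4 * L by ring] at this
    exact this
  obtain ⟨s, hs, e⟩ := hp.exists_mem_Ico (by linarith : 0 < 4 * L) t (-L)
  rw [e]
  rcases le_total s L with h1 | h1
  · exact h s ⟨hs.1, h1⟩
  · rw [← r1]
    exact h _ ⟨by linarith [hs.2], by linarith⟩

lemma extremal {α a b δ : ℝ} (hα : 0 < α) (hb : 0 < b) (ha : 0 ≤ a)
    (hδ : α * (a ^ 2 * b / 2 + a * b ^ 2 + b ^ 3 / 3) = δ) :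
    ∃ f g h : ℝ → ℝ, (∀ x, HasDerivAt f (g x) x) ∧ (∀ x, HasDerivAt g (h x) x) ∧
      (∀ x, |f x| ≤ δ) ∧ g 0 = α * (a * b + b ^ 2 / 2) ∧ (∀ x, |h x| ≤ α * b) ∧
      (∀ x y, |h x - h y| ≤ α * |x - y|) := by
  have hL : 0 < a + b := by linarith
  set L := a + b with hLdef
  set y := α * (a * b + b ^ 2 / 2) with hy
  obtain ⟨τ, τl, τ1, τ2, τ3⟩ := exists_tri hL
  obtain ⟨z1, z2⟩ := cc_zero hb.le
  let h : ℝ → ℝ := fun t => -α * cc0 b (τ t)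
  have hlip : ∀ x y, |h x - h y| ≤ α * |x - y| := by
    intro x y
    have e : h x - h y = -(α * (cc0 b (τ x) - cc0 b (τ y))) := by simp only [h]; ring
    rw [e, abs_neg, abs_mul, abs_of_pos hα]
    apply mul_le_mul_of_nonneg_left _ hα.le
    refine (cc0_lip _ _ _).trans ?_
    have := τl.dist_le_mul x y
    simpa [Real.dist_eq] using this
  have hcont : Continuous h := by
    have : LipschitzWith α.toNNReal h := LipschitzWith.of_dist_le_mul (fun x y => by
      rw [Real.dist_eq, Real.dist_eq, Real.coe_toNNReal _ hα.le]; exact hlip x y)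
    exact this.continuous
  let g : ℝ → ℝ := fun t => y + ∫ x in (0:ℝ)..t, h x
  have hg : ∀ x, HasDerivAt g (h x) x := fun x =>
    ((hcont.integral_hasStrictDerivAt 0 x).hasDerivAt).const_add y
  have gcont : Continuous g := continuous_iff_continuousAt.2 fun x => (hg x).continuousAt
  let f : ℝ → ℝ := fun t => ∫ x in (0:ℝ)..t, g x
  have hf : ∀ x, HasDerivAt f (g x) x := fun x => (gcont.integral_hasStrictDerivAt 0 x).hasDerivAt
  have g0 : g 0 = y := by simp [g]
  have f0 : f 0 = 0 := by simp [f]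
  -- explicit formulas on [-L, L]
  have sub0 : ∀ t ∈ Set.Icc (-L) L, Set.uIcc 0 t ⊆ Set.Icc (-L) L := by
    intro t ht
    exact Set.uIcc_subset_Icc ⟨by linarith, hL.le⟩ ht
  have gform : ∀ t ∈ Set.Icc (-L) L, g t = y - α * cc1 b t := by
    intro t ht
    have := aux_const (F := fun t => g t + α * cc1 b t) (F' := fun t => h t + α * cc0 b t)
      (fun x => (hg x).add ((hasDerivAt_cc1 b x).const_mul α)) (u := 0) (v := t) (by
        intro x hx
        simp only [h]
        rw [τ3 x (sub0 t ht hx)]; ring)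
    simp only [g0, z1] at this
    linarith
  have fform : ∀ t ∈ Set.Icc (-L) L, f t = y * t - α * cc2 b t := by
    intro t ht
    have := aux_const (F := fun t => f t + α * cc2 b t - y * t)
      (F' := fun t => g t + α * cc1 b t - y * 1)
      (fun x => ((hf x).add ((hasDerivAt_cc2 b x).const_mul α)).sub
        ((hasDerivAt_id x).const_mul y)) (u := 0) (v := t) (by
        intro x hx
        rw [gform x (sub0 t ht hx)]; ring)
    simp only [f0, z2] at this
    linarith
  have mL : L ∈ Set.Icc (-L) L := ⟨by linarith, le_refl _⟩
  have mL' : -L ∈ Set.Icc (-L) L := ⟨le_refl _, by linarith⟩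
  have gL : g L = 0 := by
    rw [gform L mL, hLdef, cc1_large ha hb.le, hy]; ring
  have gL' : g (-L) = 0 := by
    rw [gform (-L) mL', cc1_neg, hLdef, cc1_large ha hb.le, hy]; ring
  have fL : f L = δ := by
    rw [fform L mL, hLdef, cc2_large ha hb.le, hy, ← hδ]; ring
  have fL' : f (-L) = -δ := by
    rw [fform (-L) mL', cc2_neg, hLdef, cc2_large ha hb.le, hy, ← hδ]; ring
  have gnn : ∀ t ∈ Set.Icc (-L) L, 0 ≤ g t := by
    intro t ht
    rw [gform t ht]
    have := cc1_le hb.le (abs_le.2 ht)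
    rw [hLdef, cc1_large ha hb.le] at this
    rw [hy]
    nlinarith
  have fb : ∀ t ∈ Set.Icc (-L) L, |f t| ≤ δ := by
    intro t ht
    rw [abs_le, ← fL']
    constructor
    · exact aux_mono hf ht.1 (fun x hx => gnn x ⟨hx.1, hx.2.trans ht.2⟩)
    · rw [← fL]
      exact aux_mono hf ht.2 (fun x hx => gnn x ⟨ht.1.trans hx.1, hx.2⟩)
  have refl : ∀ c, (∀ t, τ (2 * c - t) = τ t) → g c = 0 → ∀ t, f (2 * c - t) = f t := by
    intro c hc hgc t
    have hh : ∀ t, h (2 * c - t) = h t := fun t => by simp only [h]; rw [hc]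
    have G : ∀ t, g (2 * c - t) + g t = 0 := by
      intro t
      have := aux_const (F := fun t => g (2 * c - t) + g t) (F' := fun t => - h (2 * c - t) + h t)
        (fun x => ((hg (2 * c - x)).comp_const_sub (2 * c) x).add (hg x)) (u := t) (v := c)
        (fun x _ => by rw [hh]; ring)
      rw [this, show 2 * c - c = c by ring, hgc]; ring
    have := aux_const (F := fun t => f (2 * c - t) - f t) (F' := fun t => - g (2 * c - t) - g t)
      (fun x => ((hf (2 * c - x)).comp_const_sub (2 * c) x).sub (hf x)) (u := t) (v := c)
      (fun x _ => by linarith [G x])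
    rw [show 2 * c - c = c by ring] at this
    linarith
  refine ⟨f, g, h, hf, hg, refl_bound hL (refl L τ1 gL) ?_ fb, g0, ?_, hlip⟩
  · have := refl (-L) (by
      intro t
      rw [show 2 * -L - t = -(2 * L) - t by ring, τ2]) gL'
    intro t
    rw [← this t]
    congr 1; ring
  · intro x
    simp only [h]
    rw [abs_mul, abs_neg, abs_of_pos hα]
    exact mul_le_mul_of_nonneg_left (cc0_bound hb.le _) hα.le

lemma memL_of {f g h : ℝ → ℝ} (hf : ∀ x, HasDerivAt f (g x) x) (hg : ∀ x, HasDerivAt g (h x) x)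
    {δ m α : ℝ} (hα : 0 ≤ α) (h0 : ∀ x, |f x| ≤ δ) (h2 : ∀ x, |h x| ≤ m)
    (h3 : ∀ x y, |h x - h y| ≤ α * |x - y|) :
    MemL 3 f ∧ M 0 f ≤ δ ∧ M 2 f ≤ m ∧ M 3 f ≤ α := by
  have d1 : deriv f = g := funext fun x => (hf x).deriv
  have d2 : deriv g = h := funext fun x => (hg x).deriv
  have e1 : iteratedDeriv 1 f = g := by rw [iteratedDeriv_one, d1]
  have e2 : iteratedDeriv 2 f = h := by
    rw [iteratedDeriv_succ, e1, d2]
  have e3 : iteratedDeriv 3 f = deriv h := by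
    rw [iteratedDeriv_succ, e2]
  have hl : LipschitzWith α.toNNReal h := LipschitzWith.of_dist_le_mul (fun x y => by
      rw [Real.dist_eq, Real.dist_eq, Real.coe_toNNReal _ hα]; exact h3 x y)
  have df : Differentiable ℝ f := fun x => (hf x).differentiableAt
  have dg : Differentiable ℝ g := fun x => (hg x).differentiableAt
  refine ⟨⟨df.continuous, ⟨δ, h0⟩, ?_, α.toNNReal, ?_⟩, ?_, ?_, ?_⟩
  · have c1 : ContDiff ℝ 1 g := by
      rw [contDiff_one_iff_deriv, d2]
      exact ⟨dg, hl.continuous⟩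
    have : ContDiff ℝ (1 + 1) f := by
      rw [contDiff_succ_iff_deriv, d1]
      exact ⟨df, by simp, c1⟩
    exact this.of_le (by norm_num)
  · have : iteratedDeriv (3 - 1) f = h := e2
    rw [this]; exact hl
  · rw [M, iteratedDeriv_zero]; exact unif_le h0
  · rw [M, e2]; exact unif_le h2
  · rw [M, e3]; exact unif_le (deriv_bdd hα h3)

noncomputable def Fn (η δ b : ℝ) : ℝ :=
  Real.sqrt (2 * b ^ η * δ + (b ^ η) ^ 2 * b ^ 2 / 3) - b ^ η * b / 2

lemma S_forward {η δ α a b : ℝ} (hb : 0 < b) (ha : 0 ≤ a)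
    (h1 : α * (a ^ 2 * b / 2 + a * b ^ 2 + b ^ 3 / 3) = δ) (h2 : α * b ^ (1 - η) = 1) :
    b ^ η * b ^ 2 ≤ 3 * δ ∧ α * (a * b + b ^ 2 / 2) = Fn η δ b := by
  have hp : 0 < b ^ η := Real.rpow_pos_of_pos hb η
  have e : b ^ (1 - η) * b ^ η = b := by
    rw [← Real.rpow_add hb]; simp
  have hαb : α * b = b ^ η := by
    calc α * b = (α * b ^ (1 - η)) * b ^ η := by rw [mul_assoc, e]
      _ = b ^ η := by rw [h2, one_mul]
  unfold Fn
  set p := b ^ η with hpd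
  have h1' : p * (a ^ 2 / 2 + a * b + b ^ 2 / 3) = δ := by
    rw [← h1, ← hαb]; ring
  constructor
  · rw [← h1']
    have := mul_nonneg hp.le (by positivity : 0 ≤ a ^ 2 / 2 + a * b)
    linarith
  · have : 2 * p * δ + p ^ 2 * b ^ 2 / 3 = (p * (a + b)) ^ 2 := by rw [← h1']; ring
    rw [this, Real.sqrt_sq (by positivity), ← hαb]; ring

lemma S_backward {η δ b : ℝ} (hb : 0 < b) (hδ : 0 < δ) (h : b ^ η * b ^ 2 ≤ 3 * δ) :
    ∃ α a : ℝ, 0 < α ∧ 0 ≤ a ∧ α * (a ^ 2 * b / 2 + a * b ^ 2 + b ^ 3 / 3) = δ ∧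
      α * b ^ (1 - η) = 1 ∧ Fn η δ b = α * (a * b + b ^ 2 / 2) ∧ α * b = b ^ η := by
  have hp : 0 < b ^ η := Real.rpow_pos_of_pos hb η
  have e : b ^ (1 - η) * b ^ η = b := by
    rw [← Real.rpow_add hb]; simp
  have h2 : b ^ η / b * b ^ (1 - η) = 1 := by
    rw [div_mul_eq_mul_div, mul_comm, e, div_self hb.ne']
  have hαb : b ^ η / b * b = b ^ η := by field_simp
  set R := Real.sqrt (2 * b ^ η * δ + (b ^ η) ^ 2 * b ^ 2 / 3) with hR
  have hR2 : R ^ 2 = 2 * b ^ η * δ + (b ^ η) ^ 2 * b ^ 2 / 3 := Real.sq_sqrt (by positivity)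
  have hRb : b ^ η * b ≤ R := by
    apply Real.le_sqrt_of_sq_le
    nlinarith
  have hα : 0 < b ^ η / b := by positivity
  have ha : 0 ≤ R / b ^ η - b := by
    rw [sub_nonneg, le_div_iff₀ hp]; linarith
  have h1 : b ^ η / b * ((R / b ^ η - b) ^ 2 * b / 2 + (R / b ^ η - b) * b ^ 2 + b ^ 3 / 3) = δ := by
    have : b ^ η / b * ((R / b ^ η - b) ^ 2 * b / 2 + (R / b ^ η - b) * b ^ 2 + b ^ 3 / 3)
      = R ^ 2 / b ^ η / 2 - b ^ η * b ^ 2 / 6 := by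
      field_simp; ring
    rw [this, hR2]
    field_simp; ring
  exact ⟨b ^ η / b, R / b ^ η - b, hα, ha, h1, h2, (S_forward hb ha h1 h2).2.symm, hαb⟩

/-- a good choice of `b` -/
lemma choose_b {η m2 m3 b0 : ℝ} (h0 : 0 < η) (h1 : η < 1) (hm2 : 0 ≤ m2) (hm3 : 0 ≤ m3)
    (h : m2 ^ (1 - η) * m3 ^ η ≤ 1) (hb0 : 0 < b0) :
    ∃ b, 0 < b ∧ m2 ≤ b ^ η ∧ m3 ≤ b ^ η / b := by
  rcases hm3.eq_or_lt with hz | hz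
  · refine ⟨max b0 (m2 ^ (1 / η)), lt_max_of_lt_left hb0, ?_, ?_⟩
    · calc m2 = (m2 ^ (1 / η)) ^ η := by
            rw [← Real.rpow_mul hm2, one_div, inv_mul_cancel₀ h0.ne', Real.rpow_one]
        _ ≤ _ := Real.rpow_le_rpow (by positivity) (le_max_right _ _) h0.le
    · rw [← hz]
      have : 0 < max b0 (m2 ^ (1 / η)) := lt_max_of_lt_left hb0
      positivity
  · have h1' : 0 < 1 - η := by linarith
    set b := m3 ^ (-1 / (1 - η)) with hb
    have bpos : 0 < b := Real.rpow_pos_of_pos hz _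
    have e1 : b ^ (1 - η) = m3⁻¹ := by
      rw [hb, ← Real.rpow_mul hz.le, div_mul_cancel₀ _ h1'.ne', Real.rpow_neg_one]
    have e : b ^ η * b ^ (1 - η) = b := by
      rw [← Real.rpow_add bpos]; simp
    have e2 : b ^ η = m3 * b := by
      rw [e1] at e
      field_simp at e
      linarith
    refine ⟨b, bpos, ?_, ?_⟩
    · have hk : (m3 * b) ^ (1 - η) * m3 ^ η = 1 := by
        rw [Real.mul_rpow hz.le bpos.le, e1]
        have : m3 ^ (1 - η) * m3 ^ η = m3 := by rw [← Real.rpow_add hz]; simp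
        calc m3 ^ (1 - η) * m3⁻¹ * m3 ^ η = (m3 ^ (1 - η) * m3 ^ η) * m3⁻¹ := by ring
          _ = 1 := by rw [this, mul_inv_cancel₀ hz.ne']
      rw [e2]
      have hlt : 0 < m3 ^ η := Real.rpow_pos_of_pos hz _
      have : m2 ^ (1 - η) ≤ (m3 * b) ^ (1 - η) := by
        exact le_of_mul_le_mul_right (h.trans hk.ge) hlt
      exact (Real.rpow_le_rpow_iff hm2 (by positivity) h1').1 this
    · rw [e2, mul_div_cancel_right₀ _ bpos.ne']

/-- For `η ∈ (0,1)` and `X = {f ∈ L³_{∞,∞} : M_2(f)^{1-η} M_3(f)^η ≤ 1}`, the modulus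
of continuity `ω(D¹, X; δ)` equals the value of the extremal problem
`sup {α(ab + b²/2) : α, b > 0, a ≥ 0, α(a²b/2 + ab² + b³/3) = δ, α b^{1-η} = 1}`,
and this supremum is attained. -/
theorem stmt17 (η : ℝ) (hη : η ∈ Set.Ioo (0:ℝ) 1) (δ : ℝ) (hδ : 0 < δ)
    (X : Set (ℝ → ℝ))
    (hX : X = {f : ℝ → ℝ | MemL 3 f ∧ (M 2 f) ^ (1 - η) * (M 3 f) ^ η ≤ 1})
    (S : Set ℝ)
    (hS : S = {y : ℝ | ∃ α a b : ℝ, 0 < α ∧ 0 < b ∧ 0 ≤ a ∧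
      α * (a ^ 2 * b / 2 + a * b ^ 2 + b ^ 3 / 3) = δ ∧ α * b ^ (1 - η) = 1 ∧
      y = α * (a * b + b ^ 2 / 2)}) :
    omegaMod 1 X δ = sSup S ∧ sSup S ∈ S := by
  obtain ⟨h0, h1⟩ := hη
  have h2η : 0 < 2 + η := by linarith
  set b0 : ℝ := (3 * δ) ^ (1 / (2 + η)) with hb0
  have b0pos : 0 < b0 := Real.rpow_pos_of_pos (by linarith) _
  have rp : ∀ b : ℝ, 0 < b → b ^ η * b ^ 2 = b ^ (2 + η) := by
    intro b hb
    rw [Real.rpow_add hb, Real.rpow_two, mul_comm]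
  have b0e : b0 ^ η * b0 ^ 2 = 3 * δ := by
    rw [rp b0 b0pos, hb0, ← Real.rpow_mul (by linarith), one_div, inv_mul_cancel₀ h2η.ne',
      Real.rpow_one]
  have rng : ∀ b : ℝ, 0 < b → (b ^ η * b ^ 2 ≤ 3 * δ ↔ b ≤ b0) := by
    intro b hb
    rw [← b0e, rp b hb, rp b0 b0pos]
    exact Real.rpow_le_rpow_iff hb.le b0pos.le h2η
  have Fcont : Continuous (Fn η δ) := by
    have := Real.continuous_rpow_const h0.le
    unfold Fn
    fun_prop
  obtain ⟨bm, hbm, hmax⟩ := isCompact_Icc.exists_isMaxOn (Set.nonempty_Icc.2 b0pos.le)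
    Fcont.continuousOn
  have Fzero : Fn η δ 0 = 0 := by
    simp [Fn, Real.zero_rpow h0.ne']
  have Fb0 : 0 < Fn η δ b0 := by
    obtain ⟨α, a, hα, ha, -, -, e, -⟩ := S_backward (η := η) b0pos hδ b0e.le
    rw [e]; positivity
  have hle : ∀ b, 0 < b → b ≤ b0 → Fn η δ b ≤ Fn η δ bm := fun b hb hbb => hmax ⟨hb.le, hbb⟩
  have bmpos : 0 < bm := by
    rcases hbm.1.eq_or_lt with h | h
    · have := hle b0 b0pos le_rfl
      rw [← h, Fzero] at this
      linarith
    · exact h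
  obtain ⟨α, a, hα, ha, hc1, hc2, hFm, hαb⟩ :=
    S_backward (η := η) bmpos hδ ((rng bm bmpos).2 hbm.2)
  have hgreat : IsGreatest S (Fn η δ bm) := by
    rw [hS]
    refine ⟨⟨α, a, bm, hα, bmpos, ha, hc1, hc2, hFm⟩, ?_⟩
    rintro y ⟨α', a', b', hα', hb', ha', c1, c2, rfl⟩
    obtain ⟨q1, q2⟩ := S_forward hb' ha' c1 c2
    rw [q2]
    exact hle b' hb' ((rng b' hb').1 q1)
  -- upper bound
  have hup : ∀ f ∈ X, M 0 f ≤ δ → ∀ t, |iteratedDeriv 1 f t| ≤ Fn η δ bm := by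
    intro f hf hfδ t
    rw [hX] at hf
    obtain ⟨hmem, hprod⟩ := hf
    obtain ⟨g, h, dg, dh, -, e1, k2, k3, k0, n3⟩ := memL_facts hmem
    rw [e1]
    have n2 : 0 ≤ M 2 f := (abs_nonneg _).trans (k2 0)
    obtain ⟨b, hb, l2, l3⟩ := choose_b h0 h1 n2 n3 hprod b0pos
    have hp : 0 < b ^ η := Real.rpow_pos_of_pos hb η
    have key := key_ineq_abs (δ := δ) (α := b ^ η / b) (b := b) dg dh (by positivity) hb.le
      (fun x => (k0 x).trans hfδ)
      (fun x => by rw [div_mul_cancel₀ _ hb.ne']; exact (k2 x).trans l2)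
      (fun x y => (k3 x y).trans (mul_le_mul_of_nonneg_right l3 (abs_nonneg _))) t
    rcases le_total b b0 with hbb | hbb
    · refine le_trans ?_ (hle b hb hbb)
      obtain ⟨α', a', hα', ha', c1, c2, e, e'⟩ :=
        S_backward (η := η) hb hδ ((rng b hb).2 hbb)
      have hk := key (a' + b) (by linarith)
      rw [cc2_large ha' hb.le, ← e', mul_div_cancel_right₀ _ hb.ne', ← c1] at hk
      rw [e]
      refine le_of_mul_le_mul_right (hk.trans (le_of_eq ?_)) (by linarith : 0 < a' + b)
      ring
    · refine le_trans ?_ (hle b0 b0pos le_rfl)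
      have hk := key b0 b0pos.le
      rw [cc2_small b0pos.le hbb] at hk
      have hq : Fn η δ b0 = b0 ^ η * b0 / 2 := by
        unfold Fn
        have : 2 * b0 ^ η * δ + (b0 ^ η) ^ 2 * b0 ^ 2 / 3 = (b0 ^ η * b0) ^ 2 := by
          have : δ = b0 ^ η * b0 ^ 2 / 3 := by linarith
          rw [this]; ring
        have hp0 : 0 < b0 ^ η := Real.rpow_pos_of_pos b0pos η
        rw [this, Real.sqrt_sq (by positivity)]; ring
      have hmono : b ^ η / b ≤ b0 ^ η / b0 := by
        rw [← Real.rpow_sub_one hb.ne', ← Real.rpow_sub_one b0pos.ne']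
        exact Real.rpow_le_rpow_of_nonpos b0pos hbb (by linarith)
      have hmul : b ^ η / b * (b0 ^ 3 / 6) ≤ b0 ^ η * b0 ^ 2 / 6 := by
        refine (mul_le_mul_of_nonneg_right hmono (by positivity)).trans (le_of_eq ?_)
        field_simp
      rw [hq]
      refine le_of_mul_le_mul_right ?_ b0pos
      nlinarith
  -- the extremal function
  obtain ⟨f, g, h, df, dg, f0, g0, k2, k3⟩ := extremal hα bmpos ha hc1
  obtain ⟨fm, m0, m2, m3⟩ := memL_of df dg hα.le f0 k2 k3
  have fX : f ∈ X := by
    rw [hX]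
    refine ⟨fm, ?_⟩
    have n2 : 0 ≤ M 2 f := Real.iSup_nonneg (fun _ => abs_nonneg _)
    have n3 : 0 ≤ M 3 f := Real.iSup_nonneg (fun _ => abs_nonneg _)
    have s1 : (M 2 f) ^ (1 - η) ≤ (α * bm) ^ (1 - η) := Real.rpow_le_rpow n2 m2 (by linarith)
    have s2 : (M 3 f) ^ η ≤ α ^ η := Real.rpow_le_rpow n3 m3 h0.le
    calc (M 2 f) ^ (1 - η) * (M 3 f) ^ η ≤ (α * bm) ^ (1 - η) * α ^ η :=
          mul_le_mul s1 s2 (by positivity) (by positivity)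
      _ = (α ^ (1 - η) * α ^ η) * bm ^ (1 - η) := by
          rw [Real.mul_rpow hα.le bmpos.le]; ring
      _ = α * bm ^ (1 - η) := by rw [← Real.rpow_add hα]; simp
      _ ≤ 1 := hc2.le
  have hM1 : M 1 f = Fn η δ bm := by
    apply le_antisymm
    · exact unif_le (hup f fX m0)
    · have := le_unif (hup f fX m0) 0
      rw [iteratedDeriv_one, (df 0).deriv, g0, ← hFm] at this
      refine (le_abs_self _).trans ?_
      rw [M, iteratedDeriv_one]
      exact this
  have hgreat2 : IsGreatest {y : ℝ | ∃ f ∈ X, M 0 f ≤ δ ∧ M 1 f = y} (Fn η δ bm) := by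
    refine ⟨⟨f, fX, m0, hM1⟩, ?_⟩
    rintro y ⟨f', hf', m0', rfl⟩
    exact unif_le (hup f' hf' m0')
  rw [omegaMod, hgreat2.csSup_eq, hgreat.csSup_eq]
  exact ⟨rfl, hgreat.1⟩
end

section
/- For every η ∈ [0,1] there exists a constant C > 0 such that for every f ∈ L^3_{∞,∞}, M_1(f) ≤ C · M_0(f)^{(1+η)/(2+η)} · M_2(f)^{(1−η)/(2+η)} · M_3(f)^{η/(2+η)}. -/
open MeasureTheory Filter

lemma aux_mvt (u u' : ℝ → ℝ) (c h : ℝ) (hu : ∀ s, HasDerivAt u (u' s) s) (u0 : u 0 = 0)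
    (hh : 0 ≤ h) (hb : ∀ s ∈ Set.Icc 0 h, |u' s| ≤ c) : |u h| ≤ c * h := by
  have := Convex.norm_image_sub_le_of_norm_hasDerivWithin_le (s := Set.Icc 0 h) (f := u) (f' := u')
    (C := c) (fun x _ => (hu x).hasDerivWithinAt) hb (convex_Icc 0 h)
    (Set.left_mem_Icc.2 hh) (Set.right_mem_Icc.2 hh)
  simpa [u0, abs_of_nonneg hh] using this

lemma aux_mvt2 (u u' u'' : ℝ → ℝ) (c h : ℝ) (hu : ∀ s, HasDerivAt u (u' s) s)
    (hu' : ∀ s, HasDerivAt u' (u'' s) s) (u0 : u 0 = 0) (u0' : u' 0 = 0) (hc : 0 ≤ c)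
    (hh : 0 ≤ h) (hb : ∀ s ∈ Set.Icc 0 h, |u'' s| ≤ c) : |u h| ≤ c * h * h := by
  refine aux_mvt u u' _ h hu u0 hh fun s hs => ?_
  refine (aux_mvt u' u'' c s hu' u0' hs.1 fun x hx => hb x ⟨hx.1, hx.2.trans hs.2⟩).trans ?_
  exact mul_le_mul_of_nonneg_left hs.2 hc

lemma aux_lip (g : ℝ → ℝ) (K : NNReal) (hg : LipschitzWith K g) (L : ℝ)
    (hL : ∀ t, |deriv g t| ≤ L) (x y : ℝ) : |g y - g x| ≤ L * |y - x| := by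
  rw [← (LipschitzOnWith.absolutelyContinuousOnInterval
    (hg.lipschitzOnWith (s := Set.uIcc x y))).integral_deriv_eq_sub]
  exact intervalIntegral.norm_integral_le_of_norm_le_const (f := deriv g) fun t _ => hL t

lemma aux_two (x A B : ℝ) (h : ∀ s, 0 < s → x * s ≤ 2 * A + B * s * s) (hx : 0 ≤ x)
    (hA : 0 ≤ A) (hB : 0 ≤ B) : x ^ 2 ≤ 32 * (A * B) := by
  rcases hx.eq_or_lt with rfl | hx
  · rw [zero_pow (by norm_num)]; positivity
  have h1 := h (4 * A / x + 1 / x) (by positivity)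
  rcases hB.eq_or_lt with rfl | hB
  · have : x * (4 * A / x + 1 / x) = 4 * A + 1 := by field_simp
    linarith
  have h2 := h (x / (2 * B)) (by positivity)
  have e1 : x * (x / (2 * B)) = x ^ 2 / (2 * B) := by ring
  have e2 : B * (x / (2 * B)) * (x / (2 * B)) = x ^ 2 / (2 * B) / 2 := by field_simp
  have : x ^ 2 / (2 * B) ≤ 4 * A := by linarith
  rw [div_le_iff₀ (by positivity)] at this
  nlinarith [mul_nonneg hA hB.le]

lemma aux_three (x A B : ℝ) (h : ∀ s, 0 < s → x * s ≤ A + B * s * s * s) (hx : 0 ≤ x)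
    (hA : 0 ≤ A) (hB : 0 ≤ B) : x ^ 3 ≤ 32 * (A ^ 2 * B) := by
  rcases hx.eq_or_lt with rfl | hx
  · rw [zero_pow (by norm_num)]; positivity
  rcases hB.eq_or_lt with rfl | hB
  · have h1 := h (4 * A / x + 1 / x) (by positivity)
    have : x * (4 * A / x + 1 / x) = 4 * A + 1 := by field_simp
    linarith
  set s := Real.sqrt (x / (2 * B)) with hs
  have s0 : 0 < s := Real.sqrt_pos.2 (by positivity)
  have ss : s * s = x / (2 * B) := Real.mul_self_sqrt (by positivity)
  have h2 := h s s0
  have e2 : B * s * s * s = x * s / 2 := by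
    rw [mul_assoc B, ss]; field_simp
  have h3 : x * s ≤ 2 * A := by linarith
  have h4 : (x * s) ^ 2 ≤ (2 * A) ^ 2 := by gcongr
  have e3 : (x * s) ^ 2 = x ^ 3 / (2 * B) := by
    rw [mul_pow, pow_two s, ss]; ring
  rw [e3, div_le_iff₀ (by positivity)] at h4
  nlinarith [mul_nonneg (sq_nonneg A) hB.le]

lemma aux_comb (η x A B D : ℝ) (hη : η ∈ Set.Icc (0:ℝ) 1) (hx : 0 ≤ x) (hA : 0 ≤ A) (hB : 0 ≤ B)
    (hD : 0 ≤ D) (h2 : x ^ 2 ≤ 32 * (A * B)) (h3 : x ^ 3 ≤ 32 * (A ^ 2 * D)) :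
    x ≤ (32:ℝ) ^ (1 / (2 + η)) * A ^ ((1 + η)/(2 + η)) * B ^ ((1 - η)/(2 + η)) *
        D ^ (η/(2 + η)) := by
  obtain ⟨h0, h1⟩ := hη
  have hp : 0 < 2 + η := by linarith
  have key : x ^ (2 + η) ≤ 32 * A ^ (1 + η) * B ^ (1 - η) * D ^ η := by
    have e : x ^ (2 + η) = (x ^ 2) ^ (1 - η) * (x ^ 3) ^ η := by
      rw [← Real.rpow_natCast_mul hx, ← Real.rpow_natCast_mul hx,
        ← Real.rpow_add_of_nonneg hx (by push_cast; linarith) (by positivity)]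
      congr 1; push_cast; ring
    have e2 : A ^ (1 + η) = A ^ (1 - η) * (A ^ 2) ^ η := by
      rw [← Real.rpow_natCast_mul hA,
        ← Real.rpow_add_of_nonneg hA (by linarith) (by positivity)]
      congr 1; push_cast; ring
    have e3 : (32:ℝ) = 32 ^ (1 - η) * 32 ^ η := by
      rw [← Real.rpow_add (by norm_num)]; simp
    calc x ^ (2 + η) = (x ^ 2) ^ (1 - η) * (x ^ 3) ^ η := e
      _ ≤ (32 * (A * B)) ^ (1 - η) * (32 * (A ^ 2 * D)) ^ η := by
        gcongr
      _ = (32 ^ (1 - η) * 32 ^ η) * (A ^ (1 - η) * (A ^ 2) ^ η) * B ^ (1 - η) * D ^ η := by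
        rw [Real.mul_rpow (x := 32) (by norm_num) (mul_nonneg hA hB),
          Real.mul_rpow (x := 32) (by norm_num) (by positivity), Real.mul_rpow hA hB, Real.mul_rpow (by positivity) hD]
        ring
      _ = _ := by rw [← e2, ← e3]
  have := Real.rpow_le_rpow (by positivity) key (z := (2 + η)⁻¹) (by positivity)
  rw [Real.rpow_rpow_inv hx hp.ne', Real.mul_rpow (by positivity) (by positivity),
    Real.mul_rpow (by positivity) (by positivity), Real.mul_rpow (by positivity) (by positivity),
    ← Real.rpow_mul hA, ← Real.rpow_mul hB, ← Real.rpow_mul hD] at this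
  simpa [div_eq_mul_inv] using this

/-- For every `η ∈ [0,1]` there is a constant `C > 0` such that
`M_1(f) ≤ C · M_0(f)^{(1+η)/(2+η)} · M_2(f)^{(1-η)/(2+η)} · M_3(f)^{η/(2+η)}`
for all `f ∈ L³_{∞,∞}`. -/
theorem stmt19 (η : ℝ) (hη : η ∈ Set.Icc (0:ℝ) 1) :
    ∃ C : ℝ, 0 < C ∧ ∀ f : ℝ → ℝ, MemL 3 f →
      M 1 f ≤ C * (M 0 f) ^ ((1 + η)/(2 + η)) * (M 2 f) ^ ((1 - η)/(2 + η)) *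
        (M 3 f) ^ (η/(2 + η)) := by
  refine ⟨(32:ℝ) ^ (1 / (2 + η)), by positivity, fun f hf => ?_⟩
  obtain ⟨_, ⟨C, hC⟩, hcd, K, hK⟩ := hf
  have hcd' : ContDiff ℝ 2 f := by exact_mod_cast hcd
  change LipschitzWith K (iteratedDeriv 2 f) at hK
  set f1 := iteratedDeriv 1 f with hf1
  set f2 := iteratedDeriv 2 f with hf2
  have d0 : ∀ t, HasDerivAt f (f1 t) t := fun t => by
    have := (hcd'.differentiable_iteratedDeriv 0 (by norm_num) t).hasDerivAt
    rw [← iteratedDeriv_succ, iteratedDeriv_zero] at this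
    exact this
  have d1 : ∀ t, HasDerivAt f1 (f2 t) t := fun t => by
    have := (hcd'.differentiable_iteratedDeriv 1 (by norm_num) t).hasDerivAt
    rw [← iteratedDeriv_succ] at this
    exact this
  have dp : ∀ (g g' : ℝ → ℝ), (∀ t, HasDerivAt g (g' t) t) → ∀ t s,
      HasDerivAt (fun s => g (t + s)) (g' (t + s)) s := fun g g' h t s =>
    HasDerivAt.comp_const_add t s (h _)
  have dm : ∀ (g g' : ℝ → ℝ), (∀ t, HasDerivAt g (g' t) t) → ∀ t s,
      HasDerivAt (fun s => g (t - s)) (- g' (t - s)) s := fun g g' h t s =>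
    HasDerivAt.comp_const_sub t s (h _)
  -- norms
  have hA : ∀ t, |f t| ≤ M 0 f := fun t => by
    have : BddAbove (Set.range fun t => |iteratedDeriv 0 f t|) :=
      ⟨C, by rintro _ ⟨t, rfl⟩; simpa using hC t⟩
    have := le_ciSup this t
    simpa [M, unif] using this
  have hD : ∀ t, |deriv f2 t| ≤ M 3 f := fun t => by
    have e : iteratedDeriv 3 f = deriv f2 := iteratedDeriv_succ
    have : BddAbove (Set.range fun t => |iteratedDeriv 3 f t|) :=
      ⟨K, by rintro _ ⟨t, rfl⟩; simpa [e] using norm_deriv_le_of_lipschitz (x₀ := t) hK⟩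
    have := le_ciSup this t
    simpa [M, unif, e] using this
  have A0 : 0 ≤ M 0 f := (abs_nonneg _).trans (hA 0)
  have D0 : 0 ≤ M 3 f := (abs_nonneg _).trans (hD 0)
  have lip := aux_lip f2 K hK (M 3 f) hD
  generalize M 0 f = A at *
  generalize M 3 f = D at *
  have hb2 : ∀ t, |f2 t| ≤ 4 * A + 2 * D := fun t => by
    have := aux_mvt2 (fun s => f (t + s) + f (t - s) - 2 * f t - s ^ 2 * f2 t)
      (fun s => f1 (t + s) + -f1 (t - s) - 2 * s * f2 t)
      (fun s => f2 (t + s) + f2 (t - s) - 2 * f2 t) (2 * D) 1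
      (fun s => by
        have := (((dp f f1 d0 t s).add (dm f f1 d0 t s)).sub_const (2 * f t)).sub
          ((hasDerivAt_pow 2 s).mul_const (f2 t))
        exact this.congr_deriv (by simp))
      (fun s => by
        have := ((dp f1 f2 d1 t s).add (dm f1 f2 d1 t s).neg).sub
          (((hasDerivAt_id s).const_mul 2).mul_const (f2 t))
        exact this.congr_deriv (by simp))
      (by simp; ring) (by simp) (by positivity) (by norm_num)
      (fun s hs => by
        have h1 := lip t (t + s)
        have h2 := lip t (t - s)
        rw [show t + s - t = s by ring, abs_of_nonneg hs.1] at h1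
        rw [show t - s - t = -s by ring, abs_neg, abs_of_nonneg hs.1] at h2
        have h3 : D * s ≤ D * 1 := mul_le_mul_of_nonneg_left hs.2 D0
        rw [abs_le] at *
        constructor <;> linarith [h1.1, h1.2, h2.1, h2.2])
    have a1 := abs_le.1 (hA (t + 1))
    have a2 := abs_le.1 (hA (t - 1))
    have a3 := abs_le.1 (hA t)
    rw [abs_le] at *
    constructor <;> linarith [this.1, this.2, a1.1, a1.2, a2.1, a2.2, a3.1, a3.2]
  have hB : ∀ t, |f2 t| ≤ M 2 f := fun t => by
    have : BddAbove (Set.range fun t => |iteratedDeriv 2 f t|) :=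
      ⟨_, by rintro _ ⟨t, rfl⟩; exact hb2 t⟩
    exact le_ciSup this t
  have B0 : 0 ≤ M 2 f := (abs_nonneg _).trans (hB 0)
  generalize M 2 f = B at *
  refine ciSup_le fun t => ?_
  change |f1 t| ≤ _
  refine aux_comb η _ A B D hη (abs_nonneg _) A0 B0 D0 ?_ ?_
  · refine aux_two _ _ _ (fun s hs => ?_) (abs_nonneg _) A0 B0
    have := aux_mvt2 (fun s => f (t + s) - f t - s * f1 t)
      (fun s => f1 (t + s) - f1 t) (fun s => f2 (t + s)) B s
      (fun s => by
        have := ((dp f f1 d0 t s).sub_const (f t)).sub ((hasDerivAt_id s).mul_const (f1 t))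
        exact this.congr_deriv (by simp))
      (fun s => (dp f1 f2 d1 t s).sub_const (f1 t))
      (by simp) (by simp) B0 hs.le (fun s _ => hB _)
    have a1 := abs_le.1 (hA (t + s))
    have a3 := abs_le.1 (hA t)
    have e : |f1 t| * s = |s * f1 t| := by rw [abs_mul, abs_of_pos hs, mul_comm]
    rw [e]
    rw [abs_le] at *
    constructor <;> linarith [this.1, this.2, a1.1, a1.2, a3.1, a3.2]
  · refine aux_three _ _ _ (fun s hs => ?_) (abs_nonneg _) A0 D0
    have := aux_mvt2 (fun s => f (t + s) - f (t - s) - s * (2 * f1 t))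
      (fun s => f1 (t + s) + f1 (t - s) - 2 * f1 t) (fun s => f2 (t + s) - f2 (t - s)) (2 * D * s) s
      (fun s => by
        have := ((dp f f1 d0 t s).sub (dm f f1 d0 t s)).sub
          ((hasDerivAt_id s).mul_const (2 * f1 t))
        exact this.congr_deriv (by simp))
      (fun s => by
        have := ((dp f1 f2 d1 t s).add (dm f1 f2 d1 t s)).sub_const (2 * f1 t)
        exact this.congr_deriv (by ring))
      (by simp) (by simp; ring) (by positivity) hs.le (fun x hx => by
        have h1 := lip (t - x) (t + x)
        rw [show t + x - (t - x) = 2 * x by ring, abs_of_nonneg (a := 2 * x) (by linarith [hx.1])] at h1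
        have h3 : D * x ≤ D * s := mul_le_mul_of_nonneg_left hx.2 D0
        linarith)
    have a1 := abs_le.1 (hA (t + s))
    have a3 := abs_le.1 (hA (t - s))
    have e : |f1 t| * s = |s * f1 t| := by rw [abs_mul, abs_of_pos hs, mul_comm]
    rw [e]
    rw [abs_le] at *
    constructor <;> linarith [this.1, this.2, a1.1, a1.2, a3.1, a3.2]
end
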